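/- There exists a constant L > 0 such that for all sufficiently large n, α* log n − L log log n ≤ E[ max_{1 ≤ i,j ≤ n} |P_{ij}| ] ≤ α* log n + L. -/

import Mathlib

/-!
Both bounds compare the hopcount with a branching process; the constant `αs` enters through
`αs log αs - αs = 1`.

**Upper bound.** Explore `K_n` from a vertex `i` in order of distance. By memorylessness each new
vertex is attached to a uniformly chosen explored vertex (`lintegral_argmin`), so if the explored
vertices carry marks `z ^ depth`, the expected total mark grows by the factor `1 + z / t` when the
explored set has size `t` (`lintegral_expl`). The exploration follows every minimum-weight path
starting at `i` (`expl_ge_path`). Summing over `i` gives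
`E z ^ max |P_ij| ≤ n ∏ (1 + z / t) ≤ n exp (z (1 + log n))`. Taking logarithms with `z = αs` and
using Jensen's inequality gives `αs log n + αs / log αs` (`upper_bound`).

**Lower bound.** Put `x = log n - 22 log log n` and `k = ⌊αs x⌋`. A sequence of `k + 1` distinct
vertices is *nice* if its walk has weight at most `x` and no block of consecutive edges is much
cheaper than its share; it is *good* if moreover the walk is the unique geodesic between its ends.
By the equation for `αs`, the expected number of nice sequences is at least `n e ^ (-x) / (32 k)`
(`prob_nice`, `sum_nice_ge`). A walk of weight at most `x` that is not a unique geodesic admits an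
excursion, a path of weight at most `x` between two of its vertices that uses none of its edges
(`exists_excursion`); as `n e ^ (-x) = (log n) ^ 22` is large, such excursions are unlikely
(`excursion_prob`). Hence the first moments of the nice and the good sequences nearly agree.

For the second moment, two unique geodesics can share edges only in a single block (`share_block`).
If they share `k - m` edges, then niceness forces the remaining `m` edges to be nearly as light as
their proportion of the budget `x` requires, and the total contribution of all overlaps is only a
polynomial in `k` times the mean (`sum_share_le`). Without niceness, cheap common blocks would
dominate. The second moment method (`second_moment`) then yields a good sequence, and so
`max |P_ij| ≥ k`, with probability `1 - O(k ^ 20 / (log n) ^ 22)` (`lower_bound`), and the loss in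
expectation is bounded (`lower_asymp`).
-/

open MeasureTheory ProbabilityTheory Real Filter

/-- The complete graph on `n` vertices. -/
def Kn (n : ℕ) : SimpleGraph (Fin n) := ⊤

/-- The canonical probability space for i.i.d. `Exp(mean n)` edge weights on `K_n`:
weights are indexed by `Sym2 (Fin n)` and each coordinate has the exponential
distribution with rate `1/n` (mean `n`). -/
noncomputable def edgeSpace (n : ℕ) : Measure (Sym2 (Fin n) → ℝ) :=
  haveI : ∀ _e : Sym2 (Fin n), SigmaFinite (expMeasure (1 / (n : ℝ))) := fun _e =>
    SigmaFinite.withDensity_of_ne_top' (fun _x => ENNReal.ofReal_ne_top)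
  Measure.pi (fun _e : Sym2 (Fin n) => expMeasure (1 / (n : ℝ)))

/-- The weight of a walk: the sum of the weights of its edges. -/
noncomputable def walkWeight {n : ℕ} (w : Sym2 (Fin n) → ℝ) {i j : Fin n}
    (p : (Kn n).Walk i j) : ℝ := (p.edges.map w).sum

/-- `p` is a minimum-weight path from `i` to `j`. -/
def IsMinPath {n : ℕ} (w : Sym2 (Fin n) → ℝ) {i j : Fin n} (p : (Kn n).Walk i j) : Prop :=
  p.IsPath ∧ ∀ q : (Kn n).Walk i j, q.IsPath → walkWeight w p ≤ walkWeight w q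

/-- `max_{1 ≤ i,j ≤ n} |P_{ij}|` : the largest number of edges of any
minimum-weight path between a pair of vertices. -/
noncomputable def maxMinLen {n : ℕ} (w : Sym2 (Fin n) → ℝ) : ℕ :=
  sSup {L : ℕ | ∃ (i j : Fin n) (p : (Kn n).Walk i j), IsMinPath w p ∧ p.length = L}

/-! ### Families of independent exponential variables -/

lemma expMeasure_eq_withDensity (r : ℝ) :
    expMeasure r = volume.withDensity (exponentialPDF r) := rfl

lemma measurable_exponentialPDF (r : ℝ) : Measurable (exponentialPDF r) :=
  (measurable_exponentialPDFReal r).ennreal_ofReal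

lemma lintegral_expMeasure (r : ℝ) (f : ℝ → ENNReal) (hf : Measurable f) :
    ∫⁻ x, f x ∂(expMeasure r) = ∫⁻ x, exponentialPDF r x * f x := by
  rw [expMeasure_eq_withDensity,
    lintegral_withDensity_eq_lintegral_mul _ (measurable_exponentialPDF r) hf]
  rfl

/-- The Laplace transform of the exponential distribution. -/
lemma lintegral_exp_neg_expMeasure {r c : ℝ} (hr : 0 < r) (hc : 0 ≤ c) :
    ∫⁻ x, ENNReal.ofReal (exp (-(c * x))) ∂(expMeasure r) = ENNReal.ofReal (r / (r + c)) := by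
  have hrc : 0 < r + c := by linarith
  rw [lintegral_expMeasure _ _ (by fun_prop)]
  have : ∀ x, exponentialPDF r x * ENNReal.ofReal (exp (-(c * x)))
      = ENNReal.ofReal (r / (r + c)) * exponentialPDF (r + c) x := by
    intro x
    simp only [exponentialPDF_eq]
    split_ifs with h
    · rw [← ENNReal.ofReal_mul (by positivity), ← ENNReal.ofReal_mul (by positivity)]
      congr 1
      have : exp (-((r + c) * x)) = exp (-(r * x)) * exp (-(c * x)) := by
        rw [← exp_add]; ring_nf
      rw [this]; field_simp
    · simp
  simp_rw [this]
  rw [lintegral_const_mul _ (measurable_exponentialPDF _), lintegral_exponentialPDF_eq_one hrc,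
    mul_one]

lemma expMeasure_ae_pos {r : ℝ} : ∀ᵐ x ∂(expMeasure r), 0 < x := by
  rw [expMeasure_eq_withDensity, ae_withDensity_iff (measurable_exponentialPDF r)]
  have : ∀ᵐ x : ℝ, x ≠ 0 := by simp [ae_iff]
  filter_upwards [this] with x hx h
  by_contra hneg
  have : x < 0 := lt_of_le_of_ne (not_lt.1 hneg) hx
  exact h (exponentialPDF_of_neg this)

/-- Memorylessness: the part of the exponential law above level `t`, shifted down by `t`. -/
lemma expMeasure_shift {r t : ℝ} (hr : 0 < r) (ht : 0 ≤ t) {s : Set ℝ} (hs : MeasurableSet s) :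
    expMeasure r {x | t ≤ x ∧ x - t ∈ s} = ENNReal.ofReal (exp (-(r * t))) * expMeasure r s := by
  have hm : MeasurableSet {x : ℝ | t ≤ x ∧ x - t ∈ s} :=
    measurableSet_Ici.inter ((measurable_id.sub_const t) hs)
  rw [expMeasure_eq_withDensity, withDensity_apply _ hm, withDensity_apply _ hs,
    ← lintegral_indicator hm, ← lintegral_indicator hs,
    ← lintegral_const_mul _ ((measurable_exponentialPDF r).indicator hs),
    ← lintegral_add_right_eq_self (μ := volume) _ t]
  refine lintegral_congr_ae (Eventually.of_forall fun x => ?_)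
  have hmem : x + t ∈ {x : ℝ | t ≤ x ∧ x - t ∈ s} ↔ 0 ≤ x ∧ x ∈ s := by simp
  classical
  beta_reduce
  rw [Set.indicator_apply, Set.indicator_apply]
  simp only [hmem]
  by_cases hx : x ∈ s
  · by_cases h0 : 0 ≤ x
    · simp only [hx, h0, and_self, if_true]
      rw [exponentialPDF_of_nonneg h0, exponentialPDF_of_nonneg (by linarith),
        ← ENNReal.ofReal_mul (by positivity)]
      congr 1
      rw [mul_add, neg_add, exp_add]; ring
    · simp [hx, h0, exponentialPDF_of_neg (not_le.1 h0)]
  · simp [hx]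

section Pi
variable {ι : Type*}

lemma measurable_update_prod [DecidableEq ι] (e : ι) :
    Measurable (fun p : ℝ × (ι → ℝ) => Function.update p.2 e p.1) := by
  rw [measurable_pi_iff]
  intro i
  by_cases h : i = e
  · subst h; simpa using measurable_fst
  · simp only [Function.update_of_ne h]; fun_prop

variable [Fintype ι]

/-- The law of a finite family of i.i.d. exponential variables of rate `r`. -/
noncomputable def piExp (ι : Type*) [Fintype ι] (r : ℝ) : Measure (ι → ℝ) :=
  Measure.pi fun _ => expMeasure r

lemma piExp_prob {r : ℝ} (hr : 0 < r) : IsProbabilityMeasure (piExp ι r) := by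
  have := isProbabilityMeasure_expMeasure hr
  unfold piExp; infer_instance

lemma piExp_ae_pos {r : ℝ} (hr : 0 < r) : ∀ᵐ w ∂(piExp ι r), ∀ i, 0 < w i := by
  have := isProbabilityMeasure_expMeasure hr
  rw [ae_all_iff]
  intro i
  exact (measurePreserving_eval (fun _ : ι => expMeasure r) i).quasiMeasurePreserving.ae
    expMeasure_ae_pos

/-- Redrawing one coordinate independently does not change the law. -/
lemma piExp_map_update [DecidableEq ι] {r : ℝ} (hr : 0 < r) (e : ι) :
    ((expMeasure r).prod (piExp ι r)).map (fun p => Function.update p.2 e p.1) = piExp ι r := by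
  have := isProbabilityMeasure_expMeasure hr
  have := piExp_prob (ι := ι) hr
  have hmeas := measurable_update_prod (ι := ι) e
  symm
  apply Measure.pi_eq
  intro s hs
  rw [Measure.map_apply hmeas (MeasurableSet.univ_pi hs)]
  have : (fun p : ℝ × (ι → ℝ) => Function.update p.2 e p.1) ⁻¹' (Set.pi Set.univ s)
      = s e ×ˢ (Set.pi Set.univ (fun i => if i = e then Set.univ else s i)) := by
    ext ⟨t, w⟩
    simp only [Set.mem_preimage, Set.mem_pi, Set.mem_univ, true_imp_iff, Set.mem_prod]
    constructor
    · intro h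
      refine ⟨by simpa using h e, fun i => ?_⟩
      by_cases hi : i = e
      · simp [hi]
      · simpa [hi] using h i
    · rintro ⟨h1, h2⟩ i
      by_cases hi : i = e
      · subst hi; simpa using h1
      · simpa [hi] using h2 i
  rw [this, Measure.prod_prod, piExp, Measure.pi_pi, ← Finset.mul_prod_erase Finset.univ _
    (Finset.mem_univ e), ← Finset.mul_prod_erase Finset.univ (fun i => expMeasure r (s i))
    (Finset.mem_univ e)]
  simp only [if_true, measure_univ, one_mul]
  congr 1
  refine Finset.prod_congr rfl fun i hi => ?_
  rw [if_neg (Finset.ne_of_mem_erase hi)]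

/-- Integrating one coordinate separately from the others. -/
lemma lintegral_resample [DecidableEq ι] {r : ℝ} (hr : 0 < r) (e : ι)
    (G : ℝ → (ι → ℝ) → ENNReal) (hG : Measurable (Function.uncurry G))
    (hGe : ∀ t w s, G t (Function.update w e s) = G t w) :
    ∫⁻ w, G (w e) w ∂(piExp ι r) = ∫⁻ t, ∫⁻ w, G t w ∂(piExp ι r) ∂(expMeasure r) := by
  have := isProbabilityMeasure_expMeasure hr
  have := piExp_prob (ι := ι) hr
  have hm : Measurable (fun w : ι → ℝ => G (w e) w) :=
    hG.comp (f := fun w : ι → ℝ => (w e, w)) (by fun_prop)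
  conv_lhs => rw [← piExp_map_update hr e]
  rw [lintegral_map hm (measurable_update_prod e)]
  simp only [Function.update_self, hGe]
  exact lintegral_prod _ hG.aemeasurable

/-- Memorylessness for a family `C` of coordinates. -/
lemma lintegral_shift [DecidableEq ι] {r t : ℝ} (hr : 0 < r) (ht : 0 ≤ t) (C : Finset ι)
    (f : (ι → ℝ) → ENNReal) (hf : Measurable f) :
    ∫⁻ w, (if ∀ i ∈ C, t ≤ w i then f (fun i => if i ∈ C then w i - t else w i) else 0)
        ∂(piExp ι r)
      = ENNReal.ofReal (exp (-(r * t))) ^ C.card * ∫⁻ w, f w ∂(piExp ι r) := by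
  have := isProbabilityMeasure_expMeasure hr
  have := piExp_prob (ι := ι) hr
  set c := ENNReal.ofReal (exp (-(r * t))) with hc
  have hc0 : c ≠ 0 := by simp [hc, exp_pos]
  have hct : c ≠ ⊤ := ENNReal.ofReal_ne_top
  let T : (ι → ℝ) → (ι → ℝ) := fun w i => if i ∈ C then w i - t else w i
  let A : Set (ι → ℝ) := {w | ∀ i ∈ C, t ≤ w i}
  have hT : Measurable T := by
    rw [measurable_pi_iff]; intro i
    by_cases h : i ∈ C
    · simp only [T, h, if_true]; fun_prop
    · simp only [T, h, if_false]; fun_prop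
  have hA : MeasurableSet A := by
    have : A = ⋂ i ∈ C, {w | t ≤ w i} := by ext; simp [A]
    rw [this]
    exact Finset.measurableSet_biInter _ fun i _ =>
      measurableSet_le measurable_const (measurable_pi_apply i)
  have key : ((piExp ι r).restrict A).map T = c ^ C.card • piExp ι r := by
    -- `Measure.pi_eq` characterises `piExp` itself, so the scalar goes to the other side
    have h1 : piExp ι r = (c ^ C.card)⁻¹ • ((piExp ι r).restrict A).map T := by
      apply Measure.pi_eq
      intro s hs
      rw [Measure.smul_apply, Measure.map_apply hT (MeasurableSet.univ_pi hs),
        Measure.restrict_apply (hT (MeasurableSet.univ_pi hs))]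
      have : T ⁻¹' (Set.pi Set.univ s) ∩ A
          = Set.pi Set.univ (fun i => if i ∈ C then {x | t ≤ x ∧ x - t ∈ s i} else s i) := by
        ext w
        simp only [Set.mem_inter_iff, Set.mem_preimage, Set.mem_pi, Set.mem_univ, true_imp_iff,
          A, Set.mem_ofPred_eq, T]
        constructor
        · rintro ⟨h1, h2⟩ i
          have := h1 i
          by_cases hi : i ∈ C
          · simp only [hi, if_true] at this ⊢; exact ⟨h2 i hi, this⟩
          · simpa [hi] using this
        · intro h
          refine ⟨fun i => ?_, fun i hi => ?_⟩
          · have := h i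
            by_cases hi : i ∈ C
            · simp only [hi, if_true] at this ⊢; exact this.2
            · simpa [hi] using this
          · have := h i
            simp only [hi, if_true] at this; exact this.1
      rw [this, piExp, Measure.pi_pi]
      have h2 : ∀ i, expMeasure r (if i ∈ C then {x | t ≤ x ∧ x - t ∈ s i} else s i)
          = (if i ∈ C then c else 1) * expMeasure r (s i) := by
        intro i
        split_ifs
        · rw [expMeasure_shift hr ht (hs i)]
        · simp
      simp_rw [h2]
      rw [Finset.prod_mul_distrib, Finset.prod_ite_mem]
      simp only [Finset.univ_inter, Finset.prod_const, smul_eq_mul]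
      rw [← mul_assoc, ENNReal.inv_mul_cancel (pow_ne_zero _ hc0) (ENNReal.pow_ne_top hct), one_mul]
    conv_rhs => rw [h1]
    rw [smul_smul, ENNReal.mul_inv_cancel (pow_ne_zero _ hc0) (ENNReal.pow_ne_top hct), one_smul]
  have : (fun w : ι → ℝ => (if ∀ i ∈ C, t ≤ w i then
      f (fun i => if i ∈ C then w i - t else w i) else 0)) = A.indicator (fun w => f (T w)) := by
    ext w; simp only [Set.indicator, A, T, Set.mem_ofPred_eq]
  rw [this, lintegral_indicator hA, ← lintegral_map hf hT, key, lintegral_smul_measure, smul_eq_mul]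

/-- Among the i.i.d. exponential clocks in `B`, the clock `e` rings first with probability
`1 / |B|`, and on that event the residual times are again i.i.d. exponential. -/
lemma lintegral_argmin [DecidableEq ι] {r : ℝ} (hr : 0 < r) (B : Finset ι) (e : ι) (he : e ∈ B)
    (f : (ι → ℝ) → ENNReal) (hf : Measurable f)
    (hfe : ∀ w s, f (Function.update w e s) = f w) :
    ∫⁻ w, (if ∀ i ∈ B, w e ≤ w i then f (fun i => if i ∈ B then w i - w e else w i) else 0)
        ∂(piExp ι r)
      = (B.card : ENNReal)⁻¹ * ∫⁻ w, f w ∂(piExp ι r) := by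
  have := isProbabilityMeasure_expMeasure hr
  set C := B.erase e with hC
  let G : ℝ → (ι → ℝ) → ENNReal := fun t w =>
    if ∀ i ∈ C, t ≤ w i then f (fun i => if i ∈ C then w i - t else w i) else 0
  have h1 : ∀ w : ι → ℝ, (if ∀ i ∈ B, w e ≤ w i then
      f (fun i => if i ∈ B then w i - w e else w i) else 0) = G (w e) w := by
    intro w
    have h2 : (∀ i ∈ B, w e ≤ w i) ↔ ∀ i ∈ C, w e ≤ w i := by
      constructor
      · intro h i hi; exact h i (Finset.mem_of_mem_erase hi)
      · intro h i hi
        by_cases hie : i = e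
        · rw [hie]
        · exact h i (Finset.mem_erase.2 ⟨hie, hi⟩)
    have h3 : (fun i => if i ∈ B then w i - w e else w i)
        = Function.update (fun i => if i ∈ C then w i - w e else w i) e 0 := by
      ext i
      by_cases hie : i = e
      · subst hie; simp [he]
      · simp [hie, hC]
    simp only [G, h2, h3, hfe]
  simp_rw [h1]
  have hGm : Measurable (Function.uncurry G) := by
    have hA : MeasurableSet {p : ℝ × (ι → ℝ) | ∀ i ∈ C, p.1 ≤ p.2 i} := by
      have : {p : ℝ × (ι → ℝ) | ∀ i ∈ C, p.1 ≤ p.2 i} = ⋂ i ∈ C, {p | p.1 ≤ p.2 i} := by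
        ext; simp
      rw [this]
      exact Finset.measurableSet_biInter _ fun i _ =>
        measurableSet_le (by fun_prop) (by fun_prop)
    refine Measurable.ite hA (hf.comp ?_) measurable_const
    rw [measurable_pi_iff]; intro i
    by_cases h : i ∈ C
    · simp only [h, if_true]; fun_prop
    · simp only [h, if_false]; fun_prop
  rw [lintegral_resample hr e G hGm]
  · have h4 : ∀ᵐ t ∂(expMeasure r), ∫⁻ w, G t w ∂(piExp ι r)
        = ENNReal.ofReal (exp (-((r * C.card) * t))) * ∫⁻ w, f w ∂(piExp ι r) := by
      filter_upwards [expMeasure_ae_pos] with t ht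
      rw [lintegral_shift hr ht.le C f hf, ← ENNReal.ofReal_pow (exp_pos _).le, ← exp_nat_mul]
      congr 3; ring
    rw [lintegral_congr_ae h4, lintegral_mul_const _ (by fun_prop),
      lintegral_exp_neg_expMeasure hr (by positivity)]
    congr 1
    have hB : (B.card : ℝ) = C.card + 1 := by
      rw [hC, ← Finset.card_erase_add_one he]; push_cast; ring
    have hB0 : (0 : ℝ) < B.card := by rw [hB]; positivity
    rw [← ENNReal.ofReal_natCast, ← ENNReal.ofReal_inv_of_pos hB0]
    congr 1
    rw [hB]; field_simp; ring
  · intro t w s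
    have hne : ∀ i ∈ C, i ≠ e := fun i hi => Finset.ne_of_mem_erase hi
    have h5 : (∀ i ∈ C, t ≤ Function.update w e s i) ↔ ∀ i ∈ C, t ≤ w i := by
      refine forall₂_congr fun i hi => ?_
      rw [Function.update_of_ne (hne i hi)]
    have h6 : (fun i => if i ∈ C then Function.update w e s i - t else Function.update w e s i)
        = Function.update (fun i => if i ∈ C then w i - t else w i) e s := by
      ext i
      by_cases hie : i = e
      · subst hie; simp [hC]
      · simp [hie]
    simp only [G, h5, h6, hfe]

end Pi

/-! ### First-passage exploration -/

@[simp] lemma walkWeight_nil {n : ℕ} (w : Sym2 (Fin n) → ℝ) (i : Fin n) :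
    walkWeight w (SimpleGraph.Walk.nil : (Kn n).Walk i i) = 0 := by simp [walkWeight]

@[simp] lemma walkWeight_cons {n : ℕ} (w : Sym2 (Fin n) → ℝ) {i j k : Fin n}
    (h : (Kn n).Adj i j) (p : (Kn n).Walk j k) :
    walkWeight w (SimpleGraph.Walk.cons h p) = w s(i, j) + walkWeight w p := by simp [walkWeight]

@[simp] lemma walkWeight_append {n : ℕ} (w : Sym2 (Fin n) → ℝ) {i j k : Fin n}
    (p : (Kn n).Walk i j) (q : (Kn n).Walk j k) :
    walkWeight w (p.append q) = walkWeight w p + walkWeight w q := by simp [walkWeight]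

/-- The edges joining `S` to its complement. -/
def bdry {n : ℕ} (S : Finset (Fin n)) : Finset (Sym2 (Fin n)) :=
  (S ×ˢ Sᶜ).image (fun p => s(p.1, p.2))

lemma mem_bdry {n : ℕ} {S : Finset (Fin n)} {a b : Fin n} :
    s(a, b) ∈ bdry S ↔ (a ∈ S ∧ b ∉ S) ∨ (b ∈ S ∧ a ∉ S) := by
  simp only [bdry, Finset.mem_image, Finset.mem_product, Finset.mem_compl, Prod.exists, Sym2.eq_iff]
  constructor
  · rintro ⟨x, y, ⟨hx, hy⟩, ⟨rfl, rfl⟩ | ⟨rfl, rfl⟩⟩ <;> simp [*]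
  · rintro (⟨h1, h2⟩ | ⟨h1, h2⟩)
    · exact ⟨a, b, ⟨h1, h2⟩, Or.inl ⟨rfl, rfl⟩⟩
    · exact ⟨b, a, ⟨h1, h2⟩, Or.inr ⟨rfl, rfl⟩⟩

lemma card_bdry {n : ℕ} (S : Finset (Fin n)) : (bdry S).card = S.card * Sᶜ.card := by
  rw [bdry, Finset.card_image_of_injOn, Finset.card_product]
  rintro ⟨a, b⟩ h1 ⟨c, d⟩ h2 h
  simp only [Finset.coe_product, Set.mem_prod, Finset.mem_coe, Finset.mem_compl] at h1 h2
  simp only [Sym2.eq_iff] at h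
  rcases h with ⟨rfl, rfl⟩ | ⟨rfl, rfl⟩
  · rfl
  · exact absurd h1.1 h2.2

/-- The weights after every boundary edge of `S` has been shortened by `m`. -/
def red {n : ℕ} (S : Finset (Fin n)) (m : ℝ) (w : Sym2 (Fin n) → ℝ) : Sym2 (Fin n) → ℝ :=
  fun i => if i ∈ bdry S then w i - m else w i

/-- `m` steps of first-passage exploration started from the explored set `S`. Every explored
vertex `u` carries a mark `φ u`; each step adds the endpoint `v` of a cheapest boundary edge
`s(u, v)`, gives it the mark `z * φ u`, and shortens all boundary edges by the cost just paid.
The value is the total mark at the end. In case of ties the contributions of all the cheapest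
edges are added up, which keeps the definition free of choices and changes nothing in mean. -/
noncomputable def expl {n : ℕ} (z : ENNReal) :
    ℕ → Finset (Fin n) → (Fin n → ENNReal) → (Sym2 (Fin n) → ℝ) → ENNReal
  | 0, S, φ, _ => ∑ u ∈ S, φ u
  | m + 1, S, φ, w => ∑ u ∈ S, ∑ v ∈ Sᶜ,
      if ∀ i ∈ bdry S, w s(u, v) ≤ w i then
        expl z m (insert v S) (Function.update φ v (z * φ u)) (red S (w s(u, v)) w) else 0

lemma measurable_expl {n : ℕ} (z : ENNReal) (m : ℕ) : ∀ (S : Finset (Fin n)) (φ : Fin n → ENNReal),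
    Measurable (expl z m S φ) := by
  induction m with
  | zero => intro S φ; exact measurable_const
  | succ m ih =>
    intro S φ
    show Measurable fun w => expl z (m + 1) S φ w
    simp only [expl]
    refine Finset.measurable_sum _ fun u _ => Finset.measurable_sum _ fun v _ => ?_
    refine Measurable.ite ?_ ((ih _ _).comp ?_) measurable_const
    · have : {w : Sym2 (Fin n) → ℝ | ∀ i ∈ bdry S, w s(u, v) ≤ w i}
          = ⋂ i ∈ bdry S, {w | w s(u, v) ≤ w i} := by ext; simp
      rw [this]
      exact Finset.measurableSet_biInter _ fun i _ => measurableSet_le (by fun_prop) (by fun_prop)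
    · rw [measurable_pi_iff]; intro i
      by_cases h : i ∈ bdry S
      · simp only [red, h, if_true]; fun_prop
      · simp only [red, h, if_false]; fun_prop

/-- The exploration from `S` does not look at the weights of edges inside `S`. -/
lemma expl_congr {n : ℕ} (z : ENNReal) (m : ℕ) : ∀ (S : Finset (Fin n)) (φ : Fin n → ENNReal)
    (w w' : Sym2 (Fin n) → ℝ), (∀ a b, ¬ (a ∈ S ∧ b ∈ S) → w s(a, b) = w' s(a, b)) →
    expl z m S φ w = expl z m S φ w' := by
  induction m with
  | zero => intro S φ w w' _; rfl
  | succ m ih =>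
    intro S φ w w' h
    have hb : ∀ i ∈ bdry S, w i = w' i := by
      intro i
      induction i using Sym2.ind with
      | _ a b =>
        intro hi
        rw [mem_bdry] at hi
        exact h a b (by tauto)
    unfold expl
    refine Finset.sum_congr rfl fun u hu => Finset.sum_congr rfl fun v hv => ?_
    have hv' : v ∉ S := by simpa using hv
    have huv : s(u, v) ∈ bdry S := mem_bdry.2 (Or.inl ⟨hu, hv'⟩)
    have h1 : (∀ i ∈ bdry S, w s(u, v) ≤ w i) ↔ ∀ i ∈ bdry S, w' s(u, v) ≤ w' i :=
      forall₂_congr fun i hi => by rw [hb _ huv, hb _ hi]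
    rw [ih (insert v S) _ (red S (w s(u, v)) w) (red S (w' s(u, v)) w')]
    · simp only [h1]
    · intro a b hab
      have : w s(a, b) = w' s(a, b) := h a b (fun hh => hab (by simp [hh]))
      simp only [red, this, hb _ huv]

/-- The mean of the exploration: adding a vertex to an explored set of size `s` multiplies the
expected total mark by `1 + z / s`, since the new vertex hangs off a uniformly chosen one. -/
lemma lintegral_expl {n : ℕ} {r : ℝ} (hr : 0 < r) (z : ENNReal) (m : ℕ) :
    ∀ (S : Finset (Fin n)) (φ : Fin n → ENNReal), S.Nonempty → S.card + m ≤ n →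
    ∫⁻ w, expl z m S φ w ∂(piExp (Sym2 (Fin n)) r)
      = (∑ u ∈ S, φ u) * ∏ t ∈ Finset.range m, (1 + z / ((S.card + t : ℕ) : ENNReal)) := by
  induction m with
  | zero =>
    intro S φ _ _
    have := piExp_prob (ι := Sym2 (Fin n)) hr
    simp [expl]
  | succ m ih =>
    intro S φ hS hc
    have hScard : 0 < S.card := hS.card_pos
    have hcc : Sᶜ.card = n - S.card := by simp [Finset.card_compl]
    have hccpos : 0 < Sᶜ.card := by omega
    set P := ∏ t ∈ Finset.range m, (1 + z / ((S.card + 1 + t : ℕ) : ENNReal)) with hP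
    have hterm : ∀ u ∈ S, ∀ v ∈ Sᶜ, ∫⁻ w, (if ∀ i ∈ bdry S, w s(u, v) ≤ w i then
        expl z m (insert v S) (Function.update φ v (z * φ u)) (red S (w s(u, v)) w) else 0)
          ∂(piExp (Sym2 (Fin n)) r)
        = ((S.card * Sᶜ.card : ℕ) : ENNReal)⁻¹ * ((∑ u ∈ S, φ u + z * φ u) * P) := by
      intro u hu v hv
      have hv' : v ∉ S := by simpa using hv
      have huv : s(u, v) ∈ bdry S := mem_bdry.2 (Or.inl ⟨hu, hv'⟩)
      have hupd : ∀ x ∈ S, Function.update φ v (z * φ u) x = φ x := fun x hx =>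
        Function.update_of_ne (by rintro rfl; exact hv' hx) _ _
      have := lintegral_argmin hr (bdry S) s(u, v) huv
        (expl z m (insert v S) (Function.update φ v (z * φ u))) (measurable_expl _ _ _ _) ?_
      · refine this.trans ?_
        rw [card_bdry, ih (insert v S) _ (Finset.insert_nonempty _ _)
          (by rw [Finset.card_insert_of_notMem hv']; omega),
          Finset.card_insert_of_notMem hv', Finset.sum_insert hv', Function.update_self,
          Finset.sum_congr rfl hupd]
        rw [add_comm (z * φ u)]
      · intro w s
        apply expl_congr
        intro a b hab
        rw [Function.update_of_ne]
        intro h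
        rw [Sym2.eq_iff] at h
        apply hab
        rcases h with ⟨rfl, rfl⟩ | ⟨rfl, rfl⟩ <;> simp [hu]
    have hmeas : ∀ u v, Measurable fun w : Sym2 (Fin n) → ℝ =>
        (if ∀ i ∈ bdry S, w s(u, v) ≤ w i then
        expl z m (insert v S) (Function.update φ v (z * φ u)) (red S (w s(u, v)) w) else 0) := by
      intro u v
      refine Measurable.ite ?_ ((measurable_expl _ _ _ _).comp ?_) measurable_const
      · have : {w : Sym2 (Fin n) → ℝ | ∀ i ∈ bdry S, w s(u, v) ≤ w i}
            = ⋂ i ∈ bdry S, {w | w s(u, v) ≤ w i} := by ext; simp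
        rw [this]
        exact Finset.measurableSet_biInter _ fun i _ => measurableSet_le (by fun_prop) (by fun_prop)
      · rw [measurable_pi_iff]; intro i
        by_cases h : i ∈ bdry S
        · simp only [red, h, if_true]; fun_prop
        · simp only [red, h, if_false]; fun_prop
    simp only [expl]
    rw [lintegral_finsetSum _ fun u _ => Finset.measurable_sum _ fun v _ => hmeas u v]
    rw [Finset.sum_congr rfl fun u hu => (lintegral_finsetSum _ fun v _ => hmeas u v).trans
      (Finset.sum_congr rfl fun v hv => hterm u hu v hv)]
    simp only [Finset.sum_const, nsmul_eq_mul]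
    rw [← Finset.mul_sum, ← Finset.mul_sum, ← Finset.sum_mul, Finset.sum_add_distrib,
      ← Finset.mul_sum, Finset.sum_const, nsmul_eq_mul, Finset.prod_range_succ']
    have e1 : ∏ k ∈ Finset.range m, (1 + z / ((S.card + (k + 1) : ℕ) : ENNReal)) = P := by
      rw [hP]; refine Finset.prod_congr rfl fun k _ => ?_
      rw [show S.card + (k + 1) = S.card + 1 + k by ring]
    rw [e1]
    have hs0 : (S.card : ENNReal) ≠ 0 := by exact_mod_cast hScard.ne'
    have hs1 : (Sᶜ.card : ENNReal) ≠ 0 := by exact_mod_cast hccpos.ne'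
    have ht0 : (S.card : ENNReal) ≠ ⊤ := ENNReal.natCast_ne_top _
    have ht1 : (Sᶜ.card : ENNReal) ≠ ⊤ := ENNReal.natCast_ne_top _
    rw [Nat.cast_mul, ENNReal.mul_inv (Or.inl hs0) (Or.inl ht0), add_zero]
    set F := ∑ u ∈ S, φ u
    calc (Sᶜ.card : ENNReal) * ((S.card : ENNReal)⁻¹ * (Sᶜ.card : ENNReal)⁻¹ *
            ((S.card * F + z * F) * P))
        = (Sᶜ.card * (Sᶜ.card : ENNReal)⁻¹) * (((S.card : ENNReal)⁻¹ * S.card) * F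
            + (S.card : ENNReal)⁻¹ * z * F) * P := by ring
      _ = F * (P * (1 + z / S.card)) := by
        rw [ENNReal.mul_inv_cancel hs1 ht1, ENNReal.inv_mul_cancel hs0 ht0, ENNReal.div_eq_inv_mul]
        ring

section Path
open SimpleGraph

/-- A cheapest edge leaving `S`. -/
lemma exists_argmin {n : ℕ} (S : Finset (Fin n)) (hS : S.Nonempty) (hS' : Sᶜ.Nonempty)
    (w : Sym2 (Fin n) → ℝ) : ∃ u ∈ S, ∃ v, v ∉ S ∧ ∀ i ∈ bdry S, w s(u, v) ≤ w i := by
  obtain ⟨⟨u, v⟩, h, hmin⟩ := Finset.exists_min_image (S ×ˢ Sᶜ) (fun p => w s(p.1, p.2))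
    (hS.product hS')
  simp only [Finset.mem_product, Finset.mem_compl] at h
  refine ⟨u, h.1, v, h.2, fun i hi => ?_⟩
  simp only [bdry, Finset.mem_image] at hi
  obtain ⟨p, hp, rfl⟩ := hi
  exact hmin p hp

lemma expl_ge_step {n : ℕ} (z : ENNReal) (m : ℕ) (S : Finset (Fin n)) (φ : Fin n → ENNReal)
    (w : Sym2 (Fin n) → ℝ) (u v : Fin n) (hu : u ∈ S) (hv : v ∉ S)
    (h : ∀ i ∈ bdry S, w s(u, v) ≤ w i) :
    expl z m (insert v S) (Function.update φ v (z * φ u)) (red S (w s(u, v)) w)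
      ≤ expl z (m + 1) S φ w := by
  conv_rhs => unfold expl
  have h1 := Finset.single_le_sum (f := fun v => if ∀ i ∈ bdry S, w s(u, v) ≤ w i then
        expl z m (insert v S) (Function.update φ v (z * φ u)) (red S (w s(u, v)) w) else 0)
        (fun _ _ => zero_le) (Finset.mem_compl.2 hv)
  have h2 := Finset.single_le_sum (f := fun u => ∑ v ∈ Sᶜ, if ∀ i ∈ bdry S, w s(u, v) ≤ w i then
        expl z m (insert v S) (Function.update φ v (z * φ u)) (red S (w s(u, v)) w) else 0)
        (fun _ _ => zero_le) hu
  refine le_trans ?_ h2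
  refine le_trans ?_ h1
  simp only [if_pos h, le_refl]

/-- The exploration never loses the marks present at the start: as long as vertices remain, some
boundary edge is cheapest and the exploration goes on. -/
lemma expl_ge_base {n : ℕ} (z : ENNReal) (m : ℕ) : ∀ (S : Finset (Fin n)) (φ : Fin n → ENNReal)
    (w : Sym2 (Fin n) → ℝ), S.Nonempty → S.card + m ≤ n → ∑ u ∈ S, φ u ≤ expl z m S φ w := by
  induction m with
  | zero => intro S φ w _ _; exact le_rfl
  | succ m ih =>
    intro S φ w hS hc
    have hS' : Sᶜ.Nonempty := by
      rw [← Finset.card_pos, Finset.card_compl, Fintype.card_fin]; omega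
    obtain ⟨u, hu, v, hv, h⟩ := exists_argmin S hS hS' w
    refine le_trans ?_ (expl_ge_step z m S φ w u v hu hv h)
    refine le_trans ?_ (ih (insert v S) _ _ (Finset.insert_nonempty _ _)
      (by rw [Finset.card_insert_of_notMem hv]; omega))
    have hupd : ∀ x ∈ S, Function.update φ v (z * φ u) x = φ x := fun x hx =>
      Function.update_of_ne (by rintro rfl; exact hv hx) _ _
    rw [Finset.sum_insert hv, Finset.sum_congr rfl hupd]
    exact le_add_self

lemma walkWeight_red_of_avoid {n : ℕ} (S : Finset (Fin n)) (m : ℝ) (w : Sym2 (Fin n) → ℝ)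
    {u v : Fin n} (q : (Kn n).Walk u v) (h : ∀ x ∈ q.support, x ∉ S) :
    walkWeight (red S m w) q = walkWeight w q := by
  induction q with
  | nil => simp
  | cons h' q ih =>
    rw [walkWeight_cons, walkWeight_cons, ih (fun x hx => h x (by simp [hx]))]
    congr 1
    rw [red, if_neg]
    rw [mem_bdry]
    have h1 := h _ (Walk.start_mem_support _)
    intro hh
    rcases hh with ⟨h3, -⟩ | ⟨h3, h4⟩
    · exact h1 h3
    · exact h _ (by rw [Walk.support_cons]; exact List.mem_cons_of_mem _ q.start_mem_support) h3

/-- A walk leaving `S` for good at its first step uses exactly one boundary edge of `S`. -/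
lemma walkWeight_red_of_start {n : ℕ} (S : Finset (Fin n)) (m : ℝ) (w : Sym2 (Fin n) → ℝ)
    {u v : Fin n} (q : (Kn n).Walk u v) (hu : u ∈ S) (hv : v ∉ S)
    (h : ∀ x ∈ q.support.tail, x ∉ S) :
    walkWeight w q = m + walkWeight (red S m w) q := by
  cases q with
  | nil => exact absurd hu hv
  | cons h' q =>
    simp only [Walk.support_cons, List.tail_cons] at h
    rw [walkWeight_cons, walkWeight_cons, walkWeight_red_of_avoid S m w q h, red, if_pos]
    · ring
    · exact mem_bdry.2 (Or.inl ⟨hu, h _ q.start_mem_support⟩)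

/-- A path leaving the enlarged explored set lifts to a path leaving the old one. -/
lemma lift_path {n : ℕ} (S : Finset (Fin n)) (w : Sym2 (Fin n) → ℝ)
    {u0 v0 v : Fin n} (hu0 : u0 ∈ S) (hv0 : v0 ∉ S) (hv : v ∉ S) {u : Fin n}
    (hu : u ∈ insert v0 S) (q : (Kn n).Walk u v) (hq : q.IsPath)
    (h : ∀ x ∈ q.support.tail, x ∉ insert v0 S) :
    ∃ u' ∈ S, ∃ q' : (Kn n).Walk u' v, q'.IsPath ∧ (∀ x ∈ q'.support.tail, x ∉ S) ∧
      walkWeight w q' = w s(u0, v0) + walkWeight (red S (w s(u0, v0)) w) q := by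
  by_cases huS : u ∈ S
  · have h' : ∀ x ∈ q.support.tail, x ∉ S := fun x hx hxS => h x hx (by simp [hxS])
    exact ⟨u, huS, q, hq, h', walkWeight_red_of_start S _ w q huS hv h'⟩
  · have huv : u = v0 := by simpa [huS] using hu
    subst huv
    have hav : ∀ x ∈ q.support, x ∉ S := by
      intro x hx
      rw [← Walk.cons_tail_support, List.mem_cons] at hx
      rcases hx with rfl | hx
      · exact huS
      · exact fun hxS => h x hx (by simp [hxS])
    have hadj : (Kn n).Adj u0 u := by
      simp only [Kn, top_adj]; rintro rfl; exact huS hu0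
    refine ⟨u0, hu0, Walk.cons hadj q, ?_, ?_, ?_⟩
    · rw [Walk.cons_isPath_iff]
      exact ⟨hq, fun hh => hav _ hh hu0⟩
    · simpa using hav
    · rw [walkWeight_cons, walkWeight_red_of_avoid S _ w q hav]

lemma walkWeight_nonneg {n : ℕ} (S : Finset (Fin n)) (w : Sym2 (Fin n) → ℝ)
    (hw : ∀ a b, ¬ (a ∈ S ∧ b ∈ S) → 0 ≤ w s(a, b)) {u v : Fin n} (q : (Kn n).Walk u v)
    (h : ∀ x ∈ q.support, x ∉ S) : 0 ≤ walkWeight w q := by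
  induction q with
  | nil => simp
  | cons h' q ih =>
    rw [walkWeight_cons]
    have h1 := h _ (Walk.start_mem_support _)
    exact add_nonneg (hw _ _ fun hh => h1 hh.1) (ih fun x hx => h x (by simp [hx]))

/-- The full exploration sees every minimum-weight path: it collects at least the mark that such
a path, leaving the explored set at its first vertex `u`, transports to its endpoint. -/
lemma expl_ge_path {n : ℕ} (z : ENNReal) (m : ℕ) : ∀ (S : Finset (Fin n)) (φ : Fin n → ENNReal)
    (w : Sym2 (Fin n) → ℝ), S.Nonempty → S.card + m = n →
    (∀ a b, ¬ (a ∈ S ∧ b ∈ S) → 0 ≤ w s(a, b)) →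
    ∀ (u v : Fin n) (p : (Kn n).Walk u v), u ∈ S → p.IsPath → (∀ x ∈ p.support.tail, x ∉ S) →
    (∀ u' ∈ S, ∀ q : (Kn n).Walk u' v, q.IsPath → (∀ x ∈ q.support.tail, x ∉ S) →
      walkWeight w p ≤ walkWeight w q) →
    φ u * z ^ p.length ≤ expl z m S φ w := by
  induction m with
  | zero =>
    intro S φ w hS hc hw u v p hu hp hav hmin
    have hSu : S = Finset.univ := by
      rw [← Finset.card_eq_iff_eq_univ, Fintype.card_fin]; omega
    cases p with
    | nil => simpa [expl] using Finset.single_le_sum (f := φ) (fun _ _ => zero_le) hu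
    | @cons _ v1 _ h p => exact absurd (hSu ▸ Finset.mem_univ v1) (hav v1 (by simp))
  | succ m ih =>
    intro S φ w hS hc hw u v p hu hp hav hmin
    have hS' : Sᶜ.Nonempty := by
      rw [← Finset.card_pos, Finset.card_compl, Fintype.card_fin]; omega
    cases p with
    | nil =>
      refine le_trans ?_ (expl_ge_base z (m + 1) S φ w hS hc.le)
      simpa using Finset.single_le_sum (f := φ) (fun _ _ => zero_le) hu
    | @cons _ v1 _ h p =>
      have hav' : ∀ x ∈ p.support, x ∉ S := by simpa using hav
      have hvS : v ∉ S := hav' _ p.end_mem_support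
      have hv1S : v1 ∉ S := hav' _ p.start_mem_support
      have hred : ∀ u0 v0, (∀ i ∈ bdry S, w s(u0, v0) ≤ w i) → ∀ a b,
          ¬ (a ∈ insert v0 S ∧ b ∈ insert v0 S) → 0 ≤ red S (w s(u0, v0)) w s(a, b) := by
        intro u0 v0 hm a b hab
        unfold red
        split_ifs with hb
        · linarith [hm _ hb]
        · exact hw a b fun hh => hab (by simp [hh])
      -- either the first edge of the path is a cheapest boundary edge and the path advances, or
      -- a vertex off the path is explored and the path stays put
      by_cases harg : ∀ i ∈ bdry S, w s(u, v1) ≤ w i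
      · refine le_trans ?_ (expl_ge_step z m S φ w u v1 hu hv1S harg)
        have := ih (insert v1 S) (Function.update φ v1 (z * φ u)) (red S (w s(u, v1)) w)
          (Finset.insert_nonempty _ _) (by rw [Finset.card_insert_of_notMem hv1S]; omega)
          (hred u v1 harg) v1 v p (Finset.mem_insert_self _ _) hp.of_cons ?_ ?_
        · refine le_trans (le_of_eq ?_) this
          rw [Function.update_self, Walk.length_cons, pow_succ]; ring
        · intro x hx
          have h1 := hp.of_cons.support_nodup
          rw [← Walk.cons_tail_support, List.nodup_cons] at h1
          have h2 := hav' x (List.mem_of_mem_tail hx)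
          simp only [Finset.mem_insert, not_or]
          exact ⟨fun hh => h1.1 (hh ▸ hx), h2⟩
        · intro u' hu' q hq hqa
          obtain ⟨u'', hu'', q', hq', hqa', hw'⟩ := lift_path S w hu hv1S hvS hu' q hq hqa
          have := hmin u'' hu'' q' hq' hqa'
          rw [walkWeight_cons, hw'] at this
          rw [walkWeight_red_of_avoid S _ w p hav']
          linarith
      · obtain ⟨u0, hu0, v0, hv0, hm⟩ := exists_argmin S hS hS' w
        have hlt : w s(u0, v0) < w s(u, v1) := by
          by_contra hcon
          exact harg fun i hi => (not_lt.1 hcon).trans (hm i hi)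
        -- the cheapest boundary edge would otherwise give a shortcut
        have hv0p : v0 ∉ p.support := by
          intro hmem
          have hadj : (Kn n).Adj u0 v0 := by
            simp only [Kn, top_adj]; rintro rfl; exact hv0 hu0
          have hd : ∀ x ∈ (p.dropUntil v0 hmem).support, x ∉ S := fun x hx =>
            hav' x (p.support_dropUntil_subset_support hmem hx)
          have ht : ∀ x ∈ (p.takeUntil v0 hmem).support, x ∉ S := fun x hx =>
            hav' x (p.support_takeUntil_subset_support hmem hx)
          have := hmin u0 hu0 (Walk.cons hadj (p.dropUntil v0 hmem)) (by
            rw [Walk.cons_isPath_iff]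
            exact ⟨hp.of_cons.dropUntil hmem, fun hh => hd _ hh hu0⟩) (by simpa using hd)
          rw [walkWeight_cons, walkWeight_cons] at this
          conv_lhs at this => rw [← p.take_spec hmem, walkWeight_append]
          linarith [walkWeight_nonneg S w hw _ ht]
        have huv0 : u ≠ v0 := fun hh => hv0 (hh ▸ hu)
        refine le_trans ?_ (expl_ge_step z m S φ w u0 v0 hu0 hv0 hm)
        have := ih (insert v0 S) (Function.update φ v0 (z * φ u0)) (red S (w s(u0, v0)) w)
          (Finset.insert_nonempty _ _) (by rw [Finset.card_insert_of_notMem hv0]; omega)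
          (hred u0 v0 hm) u v (Walk.cons h p) (Finset.mem_insert_of_mem hu) hp ?_ ?_
        · rwa [Function.update_of_ne huv0] at this
        · intro x hx
          simp only [Walk.support_cons, List.tail_cons] at hx
          simp only [Finset.mem_insert, not_or]
          exact ⟨fun hh => hv0p (hh ▸ hx), hav' x hx⟩
        · intro u' hu' q hq hqa
          obtain ⟨u'', hu'', q', hq', hqa', hw'⟩ := lift_path S w hu0 hv0 hvS hu' q hq hqa
          have h1 := hmin u'' hu'' q' hq' hqa'
          have h2 := walkWeight_red_of_start S (w s(u0, v0)) w (Walk.cons h p) hu hvS hav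
          linarith

lemma minPath_bddAbove {n : ℕ} (w : Sym2 (Fin n) → ℝ) :
    BddAbove {L : ℕ | ∃ (i j : Fin n) (p : (Kn n).Walk i j), IsMinPath w p ∧ p.length = L} := by
  refine ⟨n, ?_⟩
  rintro L ⟨i, j, p, hp, rfl⟩
  simpa using hp.1.length_lt.le

lemma maxMinLen_le {n : ℕ} (w : Sym2 (Fin n) → ℝ) : maxMinLen w ≤ n := by
  apply csSup_le'
  rintro L ⟨i, j, p, hp, rfl⟩
  simpa using hp.1.length_lt.le

/-- With all initial marks equal to `1`, the longest minimum-weight path contributes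
`z ^ maxMinLen w` to the exploration from its first vertex. -/
lemma pow_maxMinLen_le {n : ℕ} (hn : 0 < n) (z : ENNReal) (w : Sym2 (Fin n) → ℝ)
    (hw : ∀ e, 0 < w e) :
    z ^ maxMinLen w ≤ ∑ i : Fin n, expl z (n - 1) {i} (fun _ => 1) w := by
  have hne : {L : ℕ | ∃ (i j : Fin n) (p : (Kn n).Walk i j),
      IsMinPath w p ∧ p.length = L}.Nonempty := by
    refine ⟨0, ⟨0, hn⟩, ⟨0, hn⟩, Walk.nil, ⟨by simp, fun q hq => ?_⟩, rfl⟩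
    rw [Walk.isPath_iff_nil, ← Walk.eq_nil_iff_nil] at hq
    rw [hq]
  obtain ⟨i, j, p, hp, hl⟩ := Nat.sSup_mem hne (minPath_bddAbove w)
  change p.length = maxMinLen w at hl
  rw [← hl]
  have h := expl_ge_path z (n - 1) {i} (fun _ => 1) w (Finset.singleton_nonempty i)
    (by simp; omega) (fun a b _ => (hw _).le) i j p (by simp) hp.1 ?_ ?_
  · rw [one_mul] at h
    exact h.trans (Finset.single_le_sum (f := fun i => expl z (n - 1) {i} (fun _ => 1) w)
      (fun _ _ => zero_le) (Finset.mem_univ i))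
  · intro x hx
    have h1 := hp.1.support_nodup
    rw [← Walk.cons_tail_support, List.nodup_cons] at h1
    simp only [Finset.mem_singleton]
    rintro rfl
    exact h1.1 hx
  · intro u' hu' q hq _
    rw [Finset.mem_singleton] at hu'
    subst hu'
    exact hp.2 q hq

end Path

/-! ### Measurability and the upper bound -/

instance countable_walk {n : ℕ} (i j : Fin n) : Countable ((Kn n).Walk i j) :=
  Function.Injective.countable (f := fun p : (Kn n).Walk i j => p.support)
    fun _ _ h => SimpleGraph.Walk.ext_support h

lemma measurable_walkWeight {n : ℕ} {i j : Fin n} (p : (Kn n).Walk i j) :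
    Measurable fun w => walkWeight w p := by
  induction p with
  | nil => simp
  | cons h p ih => simp only [walkWeight_cons]; fun_prop

lemma measurableSet_isMinPath {n : ℕ} {i j : Fin n} (p : (Kn n).Walk i j) :
    MeasurableSet {w | IsMinPath w p} := by
  by_cases hp : p.IsPath
  · have : {w : Sym2 (Fin n) → ℝ | IsMinPath w p}
        = ⋂ q : (Kn n).Walk i j, ⋂ _ : q.IsPath, {w | walkWeight w p ≤ walkWeight w q} := by
      ext w; simp [IsMinPath, hp]
    rw [this]
    exact MeasurableSet.iInter fun q => MeasurableSet.iInter fun _ =>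
      measurableSet_le (measurable_walkWeight p) (measurable_walkWeight q)
  · simp [IsMinPath, hp]

lemma maxMinLen_le_iff {n : ℕ} (w : Sym2 (Fin n) → ℝ) (m : ℕ) : maxMinLen w ≤ m ↔
    ∀ (i j : Fin n) (p : (Kn n).Walk i j), IsMinPath w p → p.length ≤ m := by
  constructor
  · intro h i j p hp
    exact (le_csSup (minPath_bddAbove w) ⟨i, j, p, hp, rfl⟩).trans h
  · intro h
    apply csSup_le'
    rintro L ⟨i, j, p, hp, rfl⟩
    exact h i j p hp

lemma measurable_maxMinLen (n : ℕ) : Measurable (maxMinLen (n := n)) := by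
  apply measurable_of_Iic
  intro m
  have : (maxMinLen (n := n)) ⁻¹' Set.Iic m = ⋂ i : Fin n, ⋂ j : Fin n, ⋂ p : (Kn n).Walk i j,
      ({w | IsMinPath w p}ᶜ ∪ {_w | p.length ≤ m}) := by
    ext w
    simp only [Set.mem_preimage, Set.mem_Iic, maxMinLen_le_iff, Set.mem_iInter, Set.mem_union,
      Set.mem_compl_iff, Set.mem_ofPred_eq, imp_iff_not_or]
  rw [this]
  exact MeasurableSet.iInter fun i => MeasurableSet.iInter fun j => MeasurableSet.iInter fun p =>
    (measurableSet_isMinPath p).compl.union (MeasurableSet.const _)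

lemma edgeSpace_eq (n : ℕ) : edgeSpace n = piExp (Sym2 (Fin n)) (1 / n) := rfl

lemma integrable_maxMinLen {n : ℕ} (hn : 0 < n) :
    Integrable (fun w => (maxMinLen w : ℝ)) (edgeSpace n) := by
  have hr : (0 : ℝ) < 1 / n := by positivity
  have : IsProbabilityMeasure (edgeSpace n) := piExp_prob hr
  refine Integrable.of_bound (C := n)
    ((measurable_from_nat (f := fun k : ℕ => (k : ℝ))).comp (measurable_maxMinLen n)).aestronglyMeasurable
    (Eventually.of_forall fun w => ?_)
  simpa using maxMinLen_le w

/-- The exponential moment of the maximal hopcount, from exploring around each vertex. -/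
lemma lintegral_pow_maxMinLen {n : ℕ} (hn : 0 < n) {z : ℝ} (hz : 0 < z) :
    ∫⁻ w, ENNReal.ofReal (z ^ maxMinLen w) ∂(edgeSpace n)
      ≤ ENNReal.ofReal (n * exp (z * (1 + Real.log n))) := by
  have hr : (0 : ℝ) < 1 / n := by positivity
  have hprod : ∏ t ∈ Finset.range (n - 1), (1 + z / ((1 + t : ℕ) : ℝ))
      ≤ exp (z * (1 + Real.log n)) := by
    calc ∏ t ∈ Finset.range (n - 1), (1 + z / ((1 + t : ℕ) : ℝ))
        ≤ ∏ t ∈ Finset.range (n - 1), exp (z / ((1 + t : ℕ) : ℝ)) := by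
          refine Finset.prod_le_prod (fun i _ => by positivity) fun i _ => ?_
          rw [add_comm]; exact add_one_le_exp _
      _ = exp (z * ∑ t ∈ Finset.range (n - 1), ((1 + t : ℕ) : ℝ)⁻¹) := by
          rw [← exp_sum, Finset.mul_sum]; rfl
      _ ≤ exp (z * (1 + Real.log n)) := by
          apply exp_le_exp.2
          apply mul_le_mul_of_nonneg_left _ hz.le
          have h1 : ((harmonic n : ℚ) : ℝ) ≤ 1 + Real.log n := harmonic_le_one_add_log n
          refine le_trans ?_ h1
          rw [harmonic]; push_cast
          refine (Finset.sum_le_sum_of_subset_of_nonneg (t := Finset.range n) ?_ ?_).trans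
            (le_of_eq ?_)
          · exact Finset.range_mono (by omega)
          · intros; positivity
          · refine Finset.sum_congr rfl fun i _ => by rw [add_comm]
  have hcoe : ∀ t : ℕ, (1 + ENNReal.ofReal z / ((1 + t : ℕ) : ENNReal))
      = ENNReal.ofReal (1 + z / ((1 + t : ℕ) : ℝ)) := by
    intro t
    rw [ENNReal.ofReal_add zero_le_one (by positivity), ENNReal.ofReal_one,
      ENNReal.ofReal_div_of_pos (by positivity), ENNReal.ofReal_natCast]
  calc ∫⁻ w, ENNReal.ofReal (z ^ maxMinLen w) ∂(edgeSpace n)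
      ≤ ∫⁻ w, ∑ i : Fin n, expl (ENNReal.ofReal z) (n - 1) {i} (fun _ => 1) w
          ∂(piExp (Sym2 (Fin n)) (1 / n)) := by
        rw [edgeSpace_eq]
        refine lintegral_mono_ae ?_
        filter_upwards [piExp_ae_pos hr] with w hw
        rw [ENNReal.ofReal_pow hz.le]
        exact pow_maxMinLen_le hn _ w hw
    _ = ∑ i : Fin n, ENNReal.ofReal (∏ t ∈ Finset.range (n - 1), (1 + z / ((1 + t : ℕ) : ℝ))) := by
        rw [lintegral_finsetSum _ fun i _ => measurable_expl _ _ _ _]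
        refine Finset.sum_congr rfl fun i _ => ?_
        rw [lintegral_expl hr _ _ _ _ (Finset.singleton_nonempty i) (by simp; omega),
          Finset.sum_singleton, one_mul, Finset.card_singleton,
          ENNReal.ofReal_prod_of_nonneg fun t _ => by positivity]
        exact Finset.prod_congr rfl fun t _ => hcoe t
    _ ≤ ∑ i : Fin n, ENNReal.ofReal (exp (z * (1 + Real.log n))) :=
        Finset.sum_le_sum fun i _ => ENNReal.ofReal_le_ofReal hprod
    _ = ENNReal.ofReal (n * exp (z * (1 + Real.log n))) := by
        rw [Finset.sum_const, Finset.card_univ, Fintype.card_fin, nsmul_eq_mul,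
          ENNReal.ofReal_mul (by positivity), ENNReal.ofReal_natCast]

/-- The upper bound: Jensen's inequality applied to the exponential moment with base `αs`. -/
lemma upper_bound (αs : ℝ) (hαs : 1 < αs) (heq : αs * Real.log αs - αs = 1) {n : ℕ} (hn : 0 < n) :
    ∫ w, (maxMinLen w : ℝ) ∂(edgeSpace n) ≤ αs * Real.log n + αs / Real.log αs := by
  have hr : (0 : ℝ) < 1 / n := by positivity
  have : IsProbabilityMeasure (edgeSpace n) := piExp_prob hr
  have hz : 0 < αs := by linarith
  have hl : 0 < Real.log αs := Real.log_pos hαs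
  set M := (n : ℝ) * exp (αs * (1 + Real.log n)) with hM
  have hM0 : 0 < M := by positivity
  have hpint : Integrable (fun w => αs ^ maxMinLen w) (edgeSpace n) := by
    refine Integrable.of_bound (C := αs ^ n) ((measurable_from_nat (f := fun k : ℕ => αs ^ k)).comp
      (measurable_maxMinLen n)).aestronglyMeasurable (Eventually.of_forall fun w => ?_)
    rw [Real.norm_of_nonneg (by positivity)]
    exact pow_le_pow_right₀ hαs.le (maxMinLen_le w)
  have h1 : ∫ w, αs ^ maxMinLen w ∂(edgeSpace n) ≤ M := by
    have := lintegral_pow_maxMinLen hn hz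
    rw [integral_eq_lintegral_of_nonneg_ae (Eventually.of_forall fun w => by positivity)
      hpint.aestronglyMeasurable]
    exact ENNReal.toReal_le_of_le_ofReal hM0.le this
  -- concavity of `log`, in the form of its tangent at `M`
  have h2 : ∀ w : Sym2 (Fin n) → ℝ,
      (maxMinLen w : ℝ) * Real.log αs ≤ Real.log M + (αs ^ maxMinLen w / M - 1) := by
    intro w
    have h3 := Real.log_le_sub_one_of_pos (x := αs ^ maxMinLen w / M) (by positivity)
    rw [Real.log_div (by positivity) hM0.ne', Real.log_pow] at h3
    linarith
  have h4 : (∫ w, (maxMinLen w : ℝ) ∂(edgeSpace n)) * Real.log αs ≤ Real.log M := by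
    rw [← integral_mul_const]
    calc ∫ w, (maxMinLen w : ℝ) * Real.log αs ∂(edgeSpace n)
        ≤ ∫ w, (Real.log M + (αs ^ maxMinLen w / M - 1)) ∂(edgeSpace n) := by
          refine integral_mono ((integrable_maxMinLen hn).mul_const _) ?_ h2
          exact (integrable_const _).add ((hpint.div_const _).sub (integrable_const _))
      _ = Real.log M + ((∫ w, αs ^ maxMinLen w ∂(edgeSpace n)) / M - 1) := by
          have hsub : Integrable (fun w => αs ^ maxMinLen w / M - 1) (edgeSpace n) :=
            (hpint.div_const _).sub (integrable_const _)
          rw [integral_add (integrable_const _) hsub,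
            integral_sub (hpint.div_const _) (integrable_const _), integral_div]
          simp
      _ ≤ Real.log M := by
          have := (div_le_one hM0).2 h1
          linarith
  have h5 : Real.log M = Real.log n + αs * (1 + Real.log n) := by
    rw [hM, Real.log_mul (by positivity) (exp_pos _).ne', Real.log_exp]
  have h6 : αs * Real.log n + αs / Real.log αs = Real.log M / Real.log αs := by
    rw [h5, eq_div_iff hl.ne', add_mul, div_mul_cancel₀ _ hl.ne']
    linear_combination Real.log n * heq
  rw [h6, le_div_iff₀ hl]
  exact h4

/-! ### Tail bounds for sums, and independence -/

section Tools
variable {ι : Type*} [Fintype ι] [DecidableEq ι]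

lemma lintegral_exp_sum {r : ℝ} (hr : 0 < r) (S : Finset ι) (c : ι → ℝ) (hc : ∀ e ∈ S, 0 ≤ c e) :
    ∫⁻ w, ENNReal.ofReal (exp (-∑ e ∈ S, c e * w e)) ∂(piExp ι r)
      = ∏ e ∈ S, ENNReal.ofReal (r / (r + c e)) := by
  have := piExp_prob (ι := ι) hr
  induction S using Finset.induction_on with
  | empty => simp
  | insert a S ha ih =>
    have h0 := lintegral_resample (ι := ι) hr a
      (fun t w => ENNReal.ofReal (exp (-(c a * t))) * ENNReal.ofReal (exp (-∑ e ∈ S, c e * w e)))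
      (by unfold Function.uncurry; fun_prop) (by
        intro t w s
        have : ∀ e ∈ S, c e * Function.update w a s e = c e * w e := by
          intro e he
          rw [Function.update_of_ne]; rintro rfl; exact ha he
        simp only [Finset.sum_congr rfl this])
    calc _ = ∫⁻ w, ENNReal.ofReal (exp (-(c a * w a)))
              * ENNReal.ofReal (exp (-∑ e ∈ S, c e * w e)) ∂(piExp ι r) := by
          refine lintegral_congr fun w => ?_
          rw [← ENNReal.ofReal_mul (exp_pos _).le, ← exp_add, Finset.sum_insert ha, neg_add]
      _ = _ := by
          rw [h0, Finset.prod_insert ha, ← ih fun e he => hc e (Finset.mem_insert_of_mem he),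
            ← lintegral_exp_neg_expMeasure hr (hc a (Finset.mem_insert_self _ _)),
            ← lintegral_mul_const _ (by fun_prop)]
          refine lintegral_congr fun t => ?_
          rw [lintegral_const_mul _ (by fun_prop)]

/-- The exponential Markov inequality. -/
lemma chernoff {r : ℝ} (hr : 0 < r) (S : Finset ι) (c : ι → ℝ) (hc : ∀ e ∈ S, 0 ≤ c e) (C : ℝ)
    (A : Set (ι → ℝ)) (hA : ∀ w ∈ A, ∑ e ∈ S, c e * w e ≤ C) :
    piExp ι r A ≤ ENNReal.ofReal (exp C * ∏ e ∈ S, (r / (r + c e))) := by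
  have h1 : A ⊆ {w | 1 ≤ ENNReal.ofReal (exp C) * ENNReal.ofReal (exp (-∑ e ∈ S, c e * w e))} := by
    intro w hw
    simp only [Set.mem_ofPred_eq]
    rw [← ENNReal.ofReal_mul (exp_pos _).le, ← exp_add, ENNReal.one_le_ofReal, ← exp_zero]
    exact exp_le_exp.2 (by linarith [hA w hw])
  calc piExp ι r A ≤ _ := measure_mono h1
    _ ≤ ∫⁻ w, ENNReal.ofReal (exp C) * ENNReal.ofReal (exp (-∑ e ∈ S, c e * w e)) ∂(piExp ι r) := by
        have := mul_meas_ge_le_lintegral (μ := piExp ι r)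
          (f := fun w => ENNReal.ofReal (exp C) * ENNReal.ofReal (exp (-∑ e ∈ S, c e * w e)))
          (by fun_prop) 1
        simpa using this
    _ = _ := by
        rw [lintegral_const_mul _ (by fun_prop), lintegral_exp_sum hr S c hc,
          ENNReal.ofReal_mul (exp_pos _).le, ENNReal.ofReal_prod_of_nonneg]
        intro e he
        have := hc e he
        positivity

/-- Chernoff bound for the lower tail of a sum, with the same tilt `s` on every summand. -/
lemma prob_sum_le {r : ℝ} (hr : 0 < r) (L : List ι) (hL : L.Nodup) {s t : ℝ} (hs : 0 < s) :
    piExp ι r {w | (L.map w).sum ≤ t} ≤ ENNReal.ofReal (exp (s * t) * (r / s) ^ L.length) := by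
  have h := chernoff hr L.toFinset (fun _ => s) (fun _ _ => hs.le) (s * t)
    {w | (L.map w).sum ≤ t} (by
      intro w hw
      rw [← Finset.mul_sum, List.sum_toFinset _ hL]
      exact mul_le_mul_of_nonneg_left hw hs.le)
  refine h.trans (ENNReal.ofReal_le_ofReal ?_)
  rw [Finset.prod_const, List.toFinset_card_of_nodup hL]
  gcongr
  linarith

/-- An event determined by the coordinates in `S`. -/
def DependsOnSet (S : Finset ι) (A : Set (ι → ℝ)) : Prop :=
  ∀ w w' : ι → ℝ, (∀ e ∈ S, w e = w' e) → w ∈ A → w' ∈ A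

/-- Events determined by disjoint sets of coordinates are independent. -/
lemma indep_events {r : ℝ} (hr : 0 < r) {S T : Finset ι} (hST : Disjoint S T)
    {A B : Set (ι → ℝ)} (hA : MeasurableSet A) (hB : MeasurableSet B)
    (hAS : DependsOnSet S A) (hBT : DependsOnSet T B) :
    piExp ι r (A ∩ B) = piExp ι r A * piExp ι r B := by
  have := isProbabilityMeasure_expMeasure hr
  have hind : iIndepFun (fun (i : ι) (w : ι → ℝ) => w i) (piExp ι r) :=
    iIndepFun_pi (X := fun _ x => x) fun i => by fun_prop
  have h2 := hind.indepFun_finset S T hST fun i => by fun_prop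
  let ext : ∀ U : Finset ι, (U → ℝ) → (ι → ℝ) := fun U v e => if h : e ∈ U then v ⟨e, h⟩ else 0
  have hext : ∀ U, Measurable (ext U) := by
    intro U
    rw [measurable_pi_iff]
    intro e
    by_cases h : e ∈ U
    · simp only [ext, h, dif_pos]; fun_prop
    · simp only [ext, h, dif_neg, not_false_eq_true]; fun_prop
  have hpre : ∀ (U : Finset ι) (A : Set (ι → ℝ)), DependsOnSet U A →
      A = (fun (w : ι → ℝ) (i : U) => w i) ⁻¹' (ext U ⁻¹' A) := by
    intro U A hA
    ext w
    simp only [Set.mem_preimage]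
    constructor
    · exact hA _ _ fun e he => by simp [ext, he]
    · exact hA _ _ fun e he => by simp [ext, he]
  have h3 := h2.measure_inter_preimage_eq_mul (ext S ⁻¹' A) (ext T ⁻¹' B) (hext S hA) (hext T hB)
  rwa [← hpre S A hAS, ← hpre T B hBT] at h3

/-- Lower bound for the lower tail of a sum of exponential variables: the probability that a
Poisson variable of mean `r t` takes the value `#S`. -/
lemma prob_sum_ge {r : ℝ} (hr : 0 < r) (S : Finset ι) : ∀ t : ℝ, 0 ≤ t →
    ENNReal.ofReal (exp (-(r * t)) * (r * t) ^ S.card / S.card.factorial)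
      ≤ piExp ι r {w | ∑ e ∈ S, w e ≤ t} := by
  have := piExp_prob (ι := ι) hr
  induction S using Finset.induction_on with
  | empty =>
    intro t ht
    simp only [Finset.card_empty, pow_zero, Nat.factorial_zero, Nat.cast_one, Finset.sum_empty, ht]
    simp only [mul_one, div_one]
    rw [show {w : ι → ℝ | True} = Set.univ by ext; simp, measure_univ]
    rw [ENNReal.ofReal_le_one, exp_le_one_iff]
    have := mul_nonneg hr.le ht
    linarith
  | insert a S ha ih =>
    intro t ht
    classical
    have hms : MeasurableSet {p : ℝ × (ι → ℝ) | p.1 + ∑ e ∈ S, p.2 e ≤ t} :=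
      measurableSet_le (by fun_prop) (by fun_prop)
    have h0 := lintegral_resample (ι := ι) hr a
      (fun y w => ({p : ℝ × (ι → ℝ) | p.1 + ∑ e ∈ S, p.2 e ≤ t}).indicator 1 (y, w))
      (measurable_one.indicator hms) (by
        intro y w s
        have : ∀ e ∈ S, Function.update w a s e = w e := by
          intro e he
          rw [Function.update_of_ne]; rintro rfl; exact ha he
        simp only [Set.indicator, Set.mem_ofPred_eq, Finset.sum_congr rfl this, Pi.one_apply])
    have hms2 : MeasurableSet {w : ι → ℝ | ∑ e ∈ insert a S, w e ≤ t} :=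
      measurableSet_le (by fun_prop) (by fun_prop)
    have h1 : piExp ι r {w | ∑ e ∈ insert a S, w e ≤ t}
        = ∫⁻ y, piExp ι r {w | ∑ e ∈ S, w e ≤ t - y} ∂(expMeasure r) := by
      rw [← lintegral_indicator_one hms2]
      refine Eq.trans ?_ (h0.trans ?_)
      · refine lintegral_congr fun w => ?_
        simp only [Set.indicator, Set.mem_ofPred_eq, Finset.sum_insert ha, Pi.one_apply]
      · refine lintegral_congr fun y => ?_
        have hms3 : MeasurableSet {w : ι → ℝ | ∑ e ∈ S, w e ≤ t - y} :=
          measurableSet_le (by fun_prop) (by fun_prop)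
        rw [← lintegral_indicator_one hms3]
        refine lintegral_congr fun w => ?_
        simp only [Set.indicator, Set.mem_ofPred_eq, Pi.one_apply, le_sub_iff_add_le, add_comm]
    rw [h1, Finset.card_insert_of_notMem ha]
    set k := S.card
    set g : ℝ → ℝ := fun y => exp (-(r * t)) * r ^ (k + 1) * (t - y) ^ k / k.factorial with hg
    have hgi : ∫ y in (0 : ℝ)..t, g y
        = exp (-(r * t)) * (r * t) ^ (k + 1) / (k + 1).factorial := by
      have h5 : ∫ y in (0 : ℝ)..t, (t - y) ^ k = t ^ (k + 1) / (k + 1) := by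
        rw [intervalIntegral.integral_comp_sub_left (fun y => y ^ k) t]
        simp
      have h6 : g = fun y => (exp (-(r * t)) * r ^ (k + 1) / k.factorial) * (t - y) ^ k := by
        ext y; simp only [hg]; ring
      rw [h6, intervalIntegral.integral_const_mul, h5, Nat.factorial_succ]
      push_cast
      have : (k.factorial : ℝ) ≠ 0 := by positivity
      field_simp
      ring
    rw [← hgi, intervalIntegral.integral_of_le ht,
      ofReal_integral_eq_lintegral_ofReal]
    · have hle : ∀ y ∈ Set.Ioc 0 t, ENNReal.ofReal (g y)
          ≤ exponentialPDF r y * piExp ι r {w | ∑ e ∈ S, w e ≤ t - y} := by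
        intro y hy
        have h7 := ih (t - y) (by linarith [hy.2])
        refine le_trans ?_ (mul_le_mul_right h7 _)
        rw [exponentialPDF_of_nonneg hy.1.le, ← ENNReal.ofReal_mul (by positivity)]
        apply ENNReal.ofReal_le_ofReal
        apply le_of_eq
        simp only [hg]
        have : exp (-(r * t)) = exp (-(r * y)) * exp (-(r * (t - y))) := by
          rw [← exp_add]; ring_nf
        rw [this, mul_pow]
        ring
      have hmeas : Measurable fun y => piExp ι r {w | ∑ e ∈ S, w e ≤ t - y} := by
        have hms4 : MeasurableSet {p : ℝ × (ι → ℝ) | ∑ e ∈ S, p.2 e ≤ t - p.1} :=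
          measurableSet_le (by fun_prop) (by fun_prop)
        exact measurable_measure_prodMk_left hms4
      rw [lintegral_expMeasure r _ hmeas]
      calc _ ≤ ∫⁻ y in Set.Ioc 0 t, exponentialPDF r y * piExp ι r {w | ∑ e ∈ S, w e ≤ t - y} :=
            setLIntegral_mono' measurableSet_Ioc hle
        _ ≤ _ := setLIntegral_le_lintegral _ _
    · have : Continuous g := by simp only [hg]; fun_prop
      exact (this.intervalIntegrable 0 t).1
    · filter_upwards [ae_restrict_mem measurableSet_Ioc] with y hy
      simp only [hg]
      have : 0 ≤ t - y := by linarith [hy.2]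
      positivity

end Tools

/-! ### Light paths with evenly spread weight -/

section Nice
variable {ι : Type*}

/-- The event that the edges of `L` have total weight at most `x`, while no block of consecutive
edges is much cheaper than its share: if `m` edges of `L` lie outside the block, then the weight
of the block is at least `x - t m`. -/
def Nice (x : ℝ) (t : ℕ → ℝ) (L : List ι) : Set (ι → ℝ) :=
  {w | (L.map w).sum ≤ x ∧ ∀ P M Q : List ι, L = P ++ M ++ Q →
    x - (M.map w).sum ≤ t (P.length + Q.length)}

lemma measurable_listSum (L : List ι) : Measurable fun w : ι → ℝ => (L.map w).sum := by
  induction L with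
  | nil => simp
  | cons a L ih => simp only [List.map_cons, List.sum_cons]; fun_prop

lemma measurableSet_nice [Fintype ι] (x : ℝ) (t : ℕ → ℝ) (L : List ι) : MeasurableSet (Nice x t L) := by
  have : Nice x t L = {w | (L.map w).sum ≤ x} ∩ ⋂ P : List ι, ⋂ M : List ι, ⋂ Q : List ι,
      ⋂ _ : L = P ++ M ++ Q, {w | x - (M.map w).sum ≤ t (P.length + Q.length)} := by
    ext w; simp [Nice]
  rw [this]
  have := Fintype.toEncodable ι
  refine (measurableSet_le (measurable_listSum L) measurable_const).inter ?_
  exact MeasurableSet.iInter fun P => MeasurableSet.iInter fun M => MeasurableSet.iInter fun Q =>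
    MeasurableSet.iInter fun _ =>
      measurableSet_le (measurable_const.sub (measurable_listSum M)) measurable_const

variable [DecidableEq ι]

lemma dependsOn_listSum_le (x : ℝ) (L : List ι) :
    DependsOnSet L.toFinset {w : ι → ℝ | (L.map w).sum ≤ x} := by
  intro w w' h hw
  have : L.map w = L.map w' := List.map_congr_left fun e he => h e (by simpa using he)
  simpa [← this] using hw

lemma dependsOn_nice (x : ℝ) (t : ℕ → ℝ) (L : List ι) :
    DependsOnSet L.toFinset (Nice x t L) := by
  intro w w' h hw
  refine ⟨dependsOn_listSum_le x L w w' h hw.1, fun P M Q hL => ?_⟩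
  have : M.map w = M.map w' := List.map_congr_left fun e he => h e (by simp [hL, he])
  rw [← this]
  exact hw.2 P M Q hL

variable [Fintype ι]

/-- The probability that a light path has a block `M` which is cheaper than its share. The optimal
tilt for the total weight is `τ = k / x`; it is lowered to `3 τ / 4` on the `m` edges outside `M`.
This gains `exp (-τ t / 4)` and costs a factor of at most `(4 / 3) ^ m ≤ exp (5 m / 16)`. -/
lemma prob_bad {r x D : ℝ} (hr : 0 < r) (hx : 0 < x) (P M Q : List ι) (hnd : (P ++ M ++ Q).Nodup)
    {k : ℕ} (hk : 0 < k) (hlen : (P ++ M ++ Q).length = k) :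
    piExp ι r {w | ((P ++ M ++ Q).map w).sum ≤ x ∧
        (5 / 4 * ((P.length + Q.length : ℕ) : ℝ) + D) * x / k < x - (M.map w).sum}
      ≤ ENNReal.ofReal (exp k * (r * x / k) ^ k * exp (-(D / 4))) := by
  set m := P.length + Q.length with hm
  set τ : ℝ := k / x with hτ
  have hk' : (0 : ℝ) < k := by exact_mod_cast hk
  have hτ0 : 0 < τ := by positivity
  set c : ι → ℝ := fun e => if e ∈ M then τ else 3 / 4 * τ with hc
  set t := (5 / 4 * (m : ℝ) + D) * x / k with ht
  have hcM : ∀ e ∈ M, c e = τ := fun e he => by simp [hc, he]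
  have hdisjP : ∀ e ∈ P, e ∉ M := by
    intro e he heM
    have := (List.nodup_append.1 hnd).1
    exact (List.nodup_append.1 this).2.2 e he e heM rfl
  have hdisjQ : ∀ e ∈ Q, e ∉ M := by
    intro e he heM
    exact (List.nodup_append.1 hnd).2.2 e (by simp [heM]) e he rfl
  have hcP : ∀ e ∈ P, c e = 3 / 4 * τ := fun e he => by simp [hc, hdisjP e he]
  have hcQ : ∀ e ∈ Q, c e = 3 / 4 * τ := fun e he => by simp [hc, hdisjQ e he]
  have hθt : τ / 4 * t = (5 / 4 * m + D) / 4 := by rw [hτ, ht]; field_simp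
  have h := chernoff hr (P ++ M ++ Q).toFinset c (fun e _ => by
      simp only [hc]; split_ifs <;> positivity) (τ * x - τ / 4 * t)
      {w | ((P ++ M ++ Q).map w).sum ≤ x ∧ t < x - (M.map w).sum} (by
    rintro w ⟨h1, h2⟩
    rw [List.sum_toFinset _ hnd]
    have e1 : (P.map fun e => c e * w e).sum = 3 / 4 * τ * (P.map w).sum := by
      rw [← List.sum_map_mul_left]
      exact congrArg _ (List.map_congr_left fun e he => by rw [hcP e he])
    have e2 : (M.map fun e => c e * w e).sum = τ * (M.map w).sum := by
      rw [← List.sum_map_mul_left]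
      exact congrArg _ (List.map_congr_left fun e he => by rw [hcM e he])
    have e3 : (Q.map fun e => c e * w e).sum = 3 / 4 * τ * (Q.map w).sum := by
      rw [← List.sum_map_mul_left]
      exact congrArg _ (List.map_congr_left fun e he => by rw [hcQ e he])
    simp only [List.map_append, List.sum_append] at h1 ⊢
    rw [e1, e2, e3]
    nlinarith)
  refine h.trans (ENNReal.ofReal_le_ofReal ?_)
  rw [List.prod_toFinset _ hnd]
  have f1 : (P.map fun e => r / (r + c e)).prod = (r / (r + 3 / 4 * τ)) ^ P.length := by
    rw [List.map_congr_left (g := fun _ => r / (r + 3 / 4 * τ)) fun e he => by rw [hcP e he]]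
    simp
  have f2 : (M.map fun e => r / (r + c e)).prod = (r / (r + τ)) ^ M.length := by
    rw [List.map_congr_left (g := fun _ => r / (r + τ)) fun e he => by rw [hcM e he]]
    simp
  have f3 : (Q.map fun e => r / (r + c e)).prod = (r / (r + 3 / 4 * τ)) ^ Q.length := by
    rw [List.map_congr_left (g := fun _ => r / (r + 3 / 4 * τ)) fun e he => by rw [hcQ e he]]
    simp
  simp only [List.map_append, List.prod_append]
  rw [f1, f2, f3, hθt]
  have hkm : k = M.length + m := by
    rw [← hlen, hm]; simp only [List.length_append]; ring
  have hτx : τ * x = k := by rw [hτ]; field_simp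
  have g1 : r / (r + 3 / 4 * τ) ≤ r / τ * (4 / 3) := by
    rw [show r / τ * (4 / 3) = r / (3 / 4 * τ) by field_simp]
    gcongr; linarith
  have g2 : r / (r + τ) ≤ r / τ := by gcongr; linarith
  have g3 : (4 / 3 : ℝ) ≤ exp (5 / 16) := by
    have : (5 / 16 : ℝ) + 1 + (5 / 16) ^ 2 / 2 ≤ exp (5 / 16) := by
      have := Real.quadratic_le_exp_of_nonneg (show (0 : ℝ) ≤ 5 / 16 by norm_num)
      linarith
    linarith
  calc exp (τ * x - (5 / 4 * ↑m + D) / 4) * ((r / (r + 3 / 4 * τ)) ^ P.length *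
        (r / (r + τ)) ^ M.length * (r / (r + 3 / 4 * τ)) ^ Q.length)
      ≤ exp (τ * x - (5 / 4 * ↑m + D) / 4) * ((r / τ * (4 / 3)) ^ P.length *
        (r / τ) ^ M.length * (r / τ * (4 / 3)) ^ Q.length) := by gcongr
    _ = exp (τ * x - (5 / 4 * ↑m + D) / 4) * ((r / τ) ^ k * (4 / 3) ^ m) := by
        rw [hkm, hm]; ring
    _ ≤ exp (τ * x - (5 / 4 * ↑m + D) / 4) * ((r / τ) ^ k * exp (5 / 16) ^ m) := by gcongr
    _ = exp k * (r * x / k) ^ k * exp (-(D / 4)) := by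
        have : r / τ = r * x / k := by rw [hτ]; field_simp
        rw [this, ← exp_nat_mul]
        have : exp (τ * x - (5 / 4 * ↑m + D) / 4) * exp (m * (5 / 16)) = exp k * exp (-(D / 4)) := by
          rw [← exp_add, ← exp_add, hτx]; ring_nf
        linear_combination ((r * x / k) ^ k) * this

/-- A weak form of Stirling's upper bound, from the monotonicity of the Stirling sequence. -/
lemma factorial_le {k : ℕ} (hk : 0 < k) :
    (k.factorial : ℝ) * exp k ≤ exp 1 * k * (k : ℝ) ^ k := by
  have h := Stirling.stirlingSeq'_antitone (Nat.zero_le (k - 1))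
  simp only [Function.comp_apply, Nat.succ_eq_add_one, Nat.sub_add_cancel hk, zero_add] at h
  rw [Stirling.stirlingSeq_one, Stirling.stirlingSeq] at h
  have hk' : (0 : ℝ) < k := by exact_mod_cast hk
  rw [div_le_iff₀ (by positivity), div_pow, ← exp_nat_mul, mul_one] at h
  have h2 : √(2 * (k : ℝ)) = √2 * √k := Real.sqrt_mul (by norm_num) _
  have h3 : √(k : ℝ) ≤ k := by
    rw [Real.sqrt_le_left hk'.le]
    have : (1 : ℝ) ≤ k := by exact_mod_cast hk
    nlinarith
  have h4 : (k.factorial : ℝ) ≤ exp 1 * √k * (k ^ k / exp k) := by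
    rw [h2] at h
    have : (0 : ℝ) < √2 := by positivity
    calc _ ≤ _ := h
      _ = _ := by field_simp
  calc (k.factorial : ℝ) * exp k ≤ exp 1 * √k * (k ^ k / exp k) * exp k := by gcongr
    _ = exp 1 * √k * k ^ k := by field_simp
    _ ≤ _ := by gcongr

/-- A path is nice with at least half of the probability that `prob_sum_ge` gives for being light.
The `(k + 1) ^ 2` positions of a block enter through a union bound, and `D = 16 log k` is chosen so
that the factor `exp (-D / 4) = k ^ (-4)` beats their number and the loss `e k` in
`factorial_le`. -/
lemma prob_nice {r x : ℝ} (hr : 0 < r) (hx : 0 < x) (hrx : r * x ≤ 1) (L : List ι)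
    (hnd : L.Nodup) {k : ℕ} (hk : 100 ≤ k) (hlen : L.length = k) :
    ENNReal.ofReal (1 / 2 * (exp (-(r * x)) * (r * x) ^ k / k.factorial))
      ≤ piExp ι r (Nice x (fun m => (5 / 4 * (m : ℝ) + 16 * Real.log k) * x / k) L) := by
  have hprob := piExp_prob (ι := ι) hr
  have hk0 : 0 < k := by omega
  have hk' : (0 : ℝ) < k := by exact_mod_cast hk0
  have hk'' : (100 : ℝ) ≤ k := by exact_mod_cast hk
  set D := 16 * Real.log k with hD
  set N := Nice x (fun m => (5 / 4 * (m : ℝ) + D) * x / k) L with hN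
  set q := exp (-(r * x)) * (r * x) ^ k / k.factorial with hq
  have hq0 : 0 < q := by positivity
  set b := exp k * (r * x / k) ^ k * exp (-(D / 4)) with hb
  let Pa : ℕ × ℕ → List ι := fun p => L.take p.1
  let Ma : ℕ × ℕ → List ι := fun p => (L.drop p.1).take p.2
  let Qa : ℕ × ℕ → List ι := fun p => (L.drop p.1).drop p.2
  have hdec : ∀ p, Pa p ++ Ma p ++ Qa p = L := fun p => by
    simp only [Pa, Ma, Qa, List.append_assoc, List.take_append_drop]
  let bad : ℕ × ℕ → Set (ι → ℝ) := fun p => {w | ((Pa p ++ Ma p ++ Qa p).map w).sum ≤ x ∧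
        (5 / 4 * (((Pa p).length + (Qa p).length : ℕ) : ℝ) + D) * x / k < x - ((Ma p).map w).sum}
  set I := Finset.range (k + 1) ×ˢ Finset.range (k + 1)
  have hbad : ∀ p ∈ I, piExp ι r (bad p) ≤ ENNReal.ofReal b := fun p _ =>
    prob_bad hr hx _ _ _ (by rw [hdec]; exact hnd) hk0 (by rw [hdec]; exact hlen)
  have hcover : {w : ι → ℝ | (L.map w).sum ≤ x} ⊆ N ∪ ⋃ p ∈ I, bad p := by
    intro w hw
    by_cases h : w ∈ N
    · exact Or.inl h
    · right
      simp only [hN, Nice, Set.mem_ofPred_eq, not_and, not_forall, not_le] at h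
      obtain ⟨P, M, Q, hL, hlt⟩ := h hw
      simp only [Set.mem_iUnion]
      have hlen' : P.length + M.length + Q.length = k := by
        rw [← hlen, hL]; simp [add_assoc]
      refine ⟨(P.length, M.length), ?_, ?_⟩
      · simp only [I, Finset.mem_product, Finset.mem_range]; omega
      · have e1 : Pa (P.length, M.length) = P := by simp [Pa, hL]
        have e2 : Ma (P.length, M.length) = M := by simp [Ma, hL]
        have e3 : Qa (P.length, M.length) = Q := by simp [Qa, hL]
        refine ⟨?_, ?_⟩
        · rw [hdec]; exact hw
        · rw [e1, e2, e3]; exact hlt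
  have hlow : ENNReal.ofReal q ≤ piExp ι r {w | (L.map w).sum ≤ x} := by
    have := prob_sum_ge hr L.toFinset x hx.le
    rw [List.toFinset_card_of_nodup hnd, hlen] at this
    simpa only [List.sum_toFinset _ hnd] using this
  have hcard : (I.card : ℝ) = (k + 1) ^ 2 := by
    simp only [I, Finset.card_product, Finset.card_range]; push_cast; ring
  have h1 : ENNReal.ofReal q ≤ piExp ι r N + ENNReal.ofReal ((k + 1) ^ 2 * b) := by
    calc _ ≤ _ := hlow
      _ ≤ _ := measure_mono hcover
      _ ≤ _ := measure_union_le _ _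
      _ ≤ piExp ι r N + ENNReal.ofReal ((k + 1) ^ 2 * b) := by
        gcongr
        refine (measure_biUnion_finset_le _ _).trans ((Finset.sum_le_sum hbad).trans ?_)
        rw [Finset.sum_const, nsmul_eq_mul, ← hcard,
          ENNReal.ofReal_mul (p := (I.card : ℝ)) (by positivity),
          ENNReal.ofReal_natCast]
  have h2 : (k + 1) ^ 2 * b ≤ 1 / 2 * q := by
    have hD4 : exp (-(D / 4)) = ((k : ℝ) ^ 4)⁻¹ := by
      rw [hD, show 16 * Real.log k / 4 = ((4 : ℕ) : ℝ) * Real.log k by push_cast; ring, exp_neg,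
        exp_nat_mul, exp_log hk']
    have hf := factorial_le hk0
    have he : exp 1 < 2.7182818286 := exp_one_lt_d9
    have hex : exp (r * x) ≤ exp 1 := exp_le_exp.2 hrx
    have hkf : (0 : ℝ) < k.factorial := by positivity
    rw [hb, hq, hD4, exp_neg, div_pow]
    have key : 2 * (k + 1) ^ 2 * exp (r * x) * (k.factorial * exp k) ≤ k ^ 4 * (k : ℝ) ^ k := by
      calc 2 * (k + 1) ^ 2 * exp (r * x) * (k.factorial * exp k)
          ≤ 2 * (k + 1) ^ 2 * 2.7182818286 * (2.7182818286 * k * (k : ℝ) ^ k) := by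
            have : exp 1 * k * (k : ℝ) ^ k ≤ 2.7182818286 * k * (k : ℝ) ^ k := by gcongr
            have h5 := hf.trans this
            have h6 := hex.trans he.le
            gcongr
        _ = (2 * (k + 1) ^ 2 * 2.7182818286 * 2.7182818286 * k) * (k : ℝ) ^ k := by ring
        _ ≤ k ^ 4 * (k : ℝ) ^ k := by
            apply mul_le_mul_of_nonneg_right _ (by positivity)
            have h7 : ((k : ℝ) + 1) ^ 2 ≤ 1.1 * k ^ 2 := by nlinarith
            have h8 : (0 : ℝ) ≤ k ^ 3 * (k - 100) :=
              mul_nonneg (by positivity) (by linarith)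
            have h9 : (0 : ℝ) ≤ k * (1.1 * k ^ 2 - (k + 1) ^ 2) :=
              mul_nonneg (by positivity) (by linarith)
            have h10 : (0 : ℝ) < k ^ 3 := by positivity
            nlinarith
    have hrx0 : 0 < (r * x) ^ k := by positivity
    calc (k + 1) ^ 2 * (exp k * ((r * x) ^ k / k ^ k) * ((k : ℝ) ^ 4)⁻¹)
        = (2 * (k + 1) ^ 2 * exp (r * x) * (k.factorial * exp k))
            * ((r * x) ^ k / (2 * k ^ k * k ^ 4 * exp (r * x) * k.factorial)) := by
          field_simp
      _ ≤ (k ^ 4 * (k : ℝ) ^ k)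
            * ((r * x) ^ k / (2 * k ^ k * k ^ 4 * exp (r * x) * k.factorial)) := by
          gcongr
      _ = _ := by field_simp
  have h3 : ENNReal.ofReal q ≤ piExp ι r N + ENNReal.ofReal (1 / 2 * q) :=
    h1.trans (by gcongr)
  have h4 : ENNReal.ofReal q = ENNReal.ofReal (1 / 2 * q) + ENNReal.ofReal (1 / 2 * q) := by
    rw [← ENNReal.ofReal_add (by positivity) (by positivity)]; ring_nf
  rw [h4] at h3
  exact (ENNReal.add_le_add_iff_right ENNReal.ofReal_ne_top).1 h3

end Nice

/-! ### Strict geodesics, excursions and shared blocks -/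

section Geo
open SimpleGraph
variable {n : ℕ}

/-- `p` is strictly lighter than every other walk with the same ends. -/
def StrictGeo (w : Sym2 (Fin n) → ℝ) {i j : Fin n} (p : (Kn n).Walk i j) : Prop :=
  ∀ q : (Kn n).Walk i j, q ≠ p → walkWeight w p < walkWeight w q

lemma walkWeight_reverse (w : Sym2 (Fin n) → ℝ) {i j : Fin n} (p : (Kn n).Walk i j) :
    walkWeight w p.reverse = walkWeight w p := by
  simp [walkWeight, List.sum_reverse]

lemma StrictGeo.append_left {w : Sym2 (Fin n) → ℝ} {i j k : Fin n} {p : (Kn n).Walk i j}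
    {q : (Kn n).Walk j k} (h : StrictGeo w (p.append q)) : StrictGeo w p := by
  intro p' hp'
  have := h (p'.append q) (fun hh => hp' ?_)
  · simpa using this
  · have h1 : p'.length = p.length := by
      have := congrArg Walk.length hh; simpa using this
    have h2 := congrArg Walk.support hh
    rw [Walk.support_append, Walk.support_append] at h2
    exact Walk.ext_support (List.append_inj_left h2 (by simp [h1]))

lemma StrictGeo.reverse {w : Sym2 (Fin n) → ℝ} {i j : Fin n} {p : (Kn n).Walk i j}
    (h : StrictGeo w p) : StrictGeo w p.reverse := by
  intro q hq
  have := h q.reverse (fun hh => hq (by rw [← hh, Walk.reverse_reverse]))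
  rwa [walkWeight_reverse, ← walkWeight_reverse w p] at this

lemma StrictGeo.append_right {w : Sym2 (Fin n) → ℝ} {i j k : Fin n} {p : (Kn n).Walk i j}
    {q : (Kn n).Walk j k} (h : StrictGeo w (p.append q)) : StrictGeo w q := by
  have h1 := h.reverse
  rw [Walk.reverse_append] at h1
  simpa using h1.append_left.reverse

lemma StrictGeo.unique {w : Sym2 (Fin n) → ℝ} {i j : Fin n} {p q : (Kn n).Walk i j}
    (hp : StrictGeo w p) (hq : StrictGeo w q) : p = q := by
  by_contra h
  exact lt_asymm (hp q (Ne.symm h)) (hq p h)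

/-- The initial stretch of a walk up to its first visit of `V`. -/
lemma exists_initial (V : Set (Fin n)) {c b : Fin n} (q : (Kn n).Walk c b) (hb : b ∈ V) :
    ∃ u ∈ V, ∃ (e : (Kn n).Walk c u) (s : (Kn n).Walk u b), q = e.append s ∧
      ∀ x ∈ e.support, x ∈ V → x = u := by
  induction q with
  | nil => exact ⟨_, hb, Walk.nil, Walk.nil, rfl, by simp⟩
  | @cons c d b h q ih =>
    by_cases hc : c ∈ V
    · exact ⟨c, hc, Walk.nil, Walk.cons h q, rfl, by simp⟩
    · obtain ⟨u, hu, e, s, hq, he⟩ := ih hb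
      refine ⟨u, hu, Walk.cons h e, s, by rw [hq, Walk.cons_append], ?_⟩
      intro x hx hxV
      rw [Walk.support_cons, List.mem_cons] at hx
      rcases hx with rfl | hx
      · exact absurd hxV hc
      · exact he x hx hxV

/-- A walk meeting the vertices of `p` only at `u` uses no edge of `p`. -/
lemma edge_notMem_of_meet {i j a b u : Fin n} (p : (Kn n).Walk i j) (e : (Kn n).Walk a b)
    (he : ∀ x ∈ e.support, x ∈ {x | x ∈ p.support} → x = u) : ∀ f ∈ e.edges, f ∉ p.edges := by
  intro f
  induction f using Sym2.ind with
  | _ x y =>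
    intro h1 h2
    have hx := he x (e.fst_mem_support_of_mem_edges h1) (p.fst_mem_support_of_mem_edges h2)
    have hy := he y (e.snd_mem_support_of_mem_edges h1) (p.snd_mem_support_of_mem_edges h2)
    exact (e.adj_of_mem_edges h1).ne (hx.trans hy.symm)

/-- The only path with the ends of `p` that uses only edges of `p` is `p` itself. -/
lemma eq_of_edges_subset {i j : Fin n} (p q : (Kn n).Walk i j) (hp : p.IsPath) (hq : q.IsPath)
    (h : ∀ e ∈ q.edges, e ∈ p.edges) : q = p := by
  induction p with
  | nil =>
    rw [Walk.isPath_iff_nil, ← Walk.eq_nil_iff_nil] at hq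
    exact hq
  | @cons i c j hic p ih =>
    rw [Walk.cons_isPath_iff] at hp
    cases q with
    | nil => exact absurd p.end_mem_support hp.2
    | @cons _ d _ hid q =>
      rw [Walk.cons_isPath_iff] at hq
      have h1 := h s(i, d) (by simp)
      rw [Walk.edges_cons, List.mem_cons] at h1
      have hdc : d = c := by
        rcases h1 with h1 | h1
        · rw [Sym2.eq_iff] at h1
          rcases h1 with ⟨-, h1⟩ | ⟨h1, h2⟩
          · exact h1
          · exact h2.trans h1
        · exact absurd (p.fst_mem_support_of_mem_edges h1) hp.2
      subst hdc
      rw [ih q hp.1 hq.1 ?_]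
      intro e he
      have h2 := h e (by simp [he])
      rw [Walk.edges_cons, List.mem_cons] at h2
      rcases h2 with rfl | h2
      · exact absurd (q.fst_mem_support_of_mem_edges he) hq.2
      · exact h2

/-- A path `q` between vertices of `p` either stays on `p` or contains an excursion: a path
between two distinct vertices of `p` which uses no edge of `p`. -/
lemma excursion_or_subset {i j : Fin n} (p : (Kn n).Walk i j) {a b : Fin n} (q : (Kn n).Walk a b)
    (hq : q.IsPath) (ha : a ∈ p.support) (hb : b ∈ p.support) :
    (∃ u ∈ p.support, ∃ u' ∈ p.support, u ≠ u' ∧ ∃ e : (Kn n).Walk u u', e.IsPath ∧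
      (∀ f ∈ e.edges, f ∉ p.edges) ∧ e.edges.Sublist q.edges) ∨ ∀ e ∈ q.edges, e ∈ p.edges := by
  induction q with
  | nil => right; simp
  | @cons a c b h q ih =>
    rw [Walk.cons_isPath_iff] at hq
    by_cases hac : s(a, c) ∈ p.edges
    · rcases ih hq.1 (p.snd_mem_support_of_mem_edges hac) hb with
        ⟨u, hu, u', hu', hne, e, he, hed, hes⟩ | h'
      · left
        refine ⟨u, hu, u', hu', hne, e, he, hed, ?_⟩
        rw [Walk.edges_cons]; exact hes.cons _
      · right
        intro e he
        rw [Walk.edges_cons, List.mem_cons] at he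
        rcases he with rfl | he
        · exact hac
        · exact h' e he
    · left
      obtain ⟨u', hu', e, s, hqe, he⟩ := exists_initial {x | x ∈ p.support} q hb
      have hau : ∀ x ∈ e.support, x ∈ q.support := by
        intro x hx; rw [hqe, Walk.mem_support_append_iff]; exact Or.inl hx
      refine ⟨a, ha, u', hu', ?_, Walk.cons h e, ?_, ?_, ?_⟩
      · rintro rfl; exact hq.2 (hau _ e.end_mem_support)
      · rw [Walk.cons_isPath_iff]
        refine ⟨?_, fun hh => hq.2 (hau _ hh)⟩
        have := hq.1
        rw [hqe] at this
        exact this.of_append_left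
      · intro f hf
        rw [Walk.edges_cons, List.mem_cons] at hf
        rcases hf with rfl | hf
        · exact hac
        · exact edge_notMem_of_meet p e he f hf
      · rw [Walk.edges_cons, Walk.edges_cons, hqe, Walk.edges_append]
        exact (List.sublist_append_left _ _).cons_cons _

lemma sum_le_of_sublist {w : Sym2 (Fin n) → ℝ} (hw : ∀ e, 0 < w e) {l l' : List (Sym2 (Fin n))}
    (h : l.Sublist l') : (l.map w).sum ≤ (l'.map w).sum :=
  (h.map w).sum_le_sum fun a ha => by
    obtain ⟨e, -, rfl⟩ := List.mem_map.1 ha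
    exact (hw e).le

lemma sum_lt_of_sublist {w : Sym2 (Fin n) → ℝ} (hw : ∀ e, 0 < w e) {l l' : List (Sym2 (Fin n))}
    (h : l.Sublist l') (hne : l ≠ l') : (l.map w).sum < (l'.map w).sum := by
  obtain ⟨r, hr⟩ := h.exists_perm_append
  rw [(hr.map w).sum_eq, List.map_append, List.sum_append]
  have : r ≠ [] := by
    rintro rfl
    rw [List.append_nil] at hr
    exact hne (h.eq_of_length hr.length_eq.symm)
  have : 0 < (r.map w).sum := by
    apply List.sum_pos
    · intro x hx
      obtain ⟨e, -, rfl⟩ := List.mem_map.1 hx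
      exact hw e
    · simpa using this
  linarith

/-- If a path is not a strict geodesic, some excursion is no heavier than the whole path. -/
lemma exists_excursion {w : Sym2 (Fin n) → ℝ} (hw : ∀ e, 0 < w e) {i j : Fin n}
    (p : (Kn n).Walk i j) (hp : p.IsPath) (h : ¬ StrictGeo w p) :
    ∃ u ∈ p.support, ∃ u' ∈ p.support, u ≠ u' ∧ ∃ e : (Kn n).Walk u u', e.IsPath ∧
      (∀ f ∈ e.edges, f ∉ p.edges) ∧ walkWeight w e ≤ walkWeight w p := by
  simp only [StrictGeo, not_forall, not_lt] at h
  obtain ⟨q, hqp, hqw⟩ := h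
  have hsub := q.edges_bypass_sublist_edges
  rcases excursion_or_subset p q.bypass q.bypass_isPath p.start_mem_support p.end_mem_support with
    ⟨u, hu, u', hu', hne, e, he, hed, hes⟩ | h'
  · exact ⟨u, hu, u', hu', hne, e, he, hed, (sum_le_of_sublist hw (hes.trans hsub)).trans hqw⟩
  · have h1 := eq_of_edges_subset p q.bypass hp q.bypass_isPath h'
    rw [h1] at hsub
    have h2 : p.edges ≠ q.edges := by
      intro hh
      have hs : q.bypass.support = q.support := by
        apply q.support_bypass_sublist_support.eq_of_length
        rw [h1]
        have := congrArg List.length hh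
        simpa using this
      exact hqp (by rw [← h1]; exact (Walk.ext_support hs).symm)
    exact absurd hqw (not_le.2 (sum_lt_of_sublist hw hsub h2))

lemma getVert_middle {a b c d : Fin n} (A : (Kn n).Walk a b) (M : (Kn n).Walk b c)
    (B : (Kn n).Walk c d) {s : ℕ} (hs : s ≤ M.length) :
    ((A.append M).append B).getVert (A.length + s) = M.getVert s := by
  rw [← Walk.append_assoc, Walk.getVert_append, if_neg (by omega),
    Nat.add_sub_cancel_left, Walk.getVert_append]
  split_ifs with hlt
  · rfl
  · have : s = M.length := by omega
    rw [this, Nat.sub_self, Walk.getVert_zero, Walk.getVert_length]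

/-- Two strict geodesics sharing an edge share exactly one block of consecutive edges,
traversed in the same or in opposite directions. -/
lemma share_block {w : Sym2 (Fin n) → ℝ} {i j i' j' : Fin n} (v : (Kn n).Walk i j)
    (v' : (Kn n).Walk i' j') (hv : StrictGeo w v) (hv' : StrictGeo w v')
    (h : ∃ e ∈ v'.edges, e ∈ v.edges) :
    ∃ P M Q : List (Sym2 (Fin n)), v'.edges = P ++ M ++ Q ∧ (∀ e ∈ P ++ Q, e ∉ v.edges) ∧
      1 ≤ M.length ∧ ∃ c, c + M.length ≤ v.length ∧
      ((∀ s ≤ M.length, v'.getVert (P.length + s) = v.getVert (c + s)) ∨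
       (∀ s ≤ M.length, v'.getVert (P.length + s) = v.getVert (c + (M.length - s)))) := by
  classical
  obtain ⟨e0, he0', he0⟩ := h
  obtain ⟨a, ha', ha⟩ : ∃ a, a ∈ v'.support ∧ a ∈ v.support := by
    induction e0 using Sym2.ind with
    | _ x y => exact ⟨x, v'.fst_mem_support_of_mem_edges he0', v.fst_mem_support_of_mem_edges he0⟩
  -- `x` and `y` are the first and the last vertex of `v'` on `v`; between them both geodesics agree
  obtain ⟨x, hx, A, R, hA, hAx⟩ := exists_initial {x | x ∈ v.support} (v'.takeUntil a ha') ha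
  obtain ⟨y, hy, B, R', hB, hBy⟩ := exists_initial {x | x ∈ v.support}
    (v'.dropUntil a ha').reverse ha
  obtain ⟨M, hM⟩ : ∃ M : (Kn n).Walk x y, M = R.append R'.reverse := ⟨_, rfl⟩
  have hdec : v' = (A.append M).append B.reverse := by
    have h1 : v'.dropUntil a ha' = R'.reverse.append B.reverse := by
      rw [← Walk.reverse_append, ← hB, Walk.reverse_reverse]
    rw [← v'.take_spec ha', hA, h1, hM]
    simp only [Walk.append_assoc]
  have hedges : v'.edges = A.edges ++ M.edges ++ B.reverse.edges := by
    rw [hdec, Walk.edges_append, Walk.edges_append]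
  have hAed := edge_notMem_of_meet v A hAx
  have hBed : ∀ e ∈ B.reverse.edges, e ∉ v.edges := by
    intro e he
    rw [Walk.edges_reverse, List.mem_reverse] at he
    exact edge_notMem_of_meet v B hBy e he
  have hMgeo : StrictGeo w M := by
    rw [hdec] at hv'
    exact hv'.append_left.append_right
  have hvert : ∀ s ≤ M.length, v'.getVert (A.length + s) = M.getVert s := by
    intro s hs
    rw [hdec, getVert_middle A M B.reverse hs]
  refine ⟨A.edges, M.edges, B.reverse.edges, hedges, ?_, ?_, ?_⟩
  · intro e he
    rw [List.mem_append] at he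
    exact he.elim (hAed e) (hBed e)
  · rw [hedges, List.mem_append, List.mem_append] at he0'
    have : e0 ∈ M.edges := by
      rcases he0' with (h1 | h1) | h1
      · exact absurd he0 (hAed _ h1)
      · exact h1
      · exact absurd he0 (hBed _ h1)
    exact List.length_pos_of_mem this
  · simp only [Walk.length_edges]
    have hx' : x ∈ v.support := hx
    have hy' : y ∈ v.support := hy
    rw [← v.take_spec hx', Walk.mem_support_append_iff] at hy'
    rcases hy' with hy' | hy'
    · -- `v` visits `y` before `x`
      set T := v.takeUntil x hx'
      have hdv : v = ((T.takeUntil y hy').append (T.dropUntil y hy')).append (v.dropUntil x hx') := by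
        rw [T.take_spec, v.take_spec]
      have hg : StrictGeo w (T.dropUntil y hy') := by
        rw [hdv] at hv; exact hv.append_left.append_right
      have hMeq : M = (T.dropUntil y hy').reverse := hMgeo.unique hg.reverse
      have hlen : M.length = (T.dropUntil y hy').length := by rw [hMeq, Walk.length_reverse]
      have hl2 := congrArg Walk.length hdv
      simp only [Walk.length_append] at hl2
      refine ⟨(T.takeUntil y hy').length, by omega, Or.inr fun s hs => ?_⟩
      rw [hvert s hs, hMeq, Walk.getVert_reverse, ← hMeq, hlen]
      exact ((congrArg (fun p => Walk.getVert p _) hdv).trans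
        (getVert_middle _ _ _ (Nat.sub_le _ _))).symm
    · set T := v.dropUntil x hx'
      have hdv : v = (v.takeUntil x hx').append ((T.takeUntil y hy').append (T.dropUntil y hy')) := by
        rw [T.take_spec, v.take_spec]
      have hg : StrictGeo w (T.takeUntil y hy') := by
        rw [hdv] at hv; exact hv.append_right.append_left
      have hMeq : M = T.takeUntil y hy' := hMgeo.unique hg
      have hlen : M.length = (T.takeUntil y hy').length := by rw [hMeq]
      have hl2 := congrArg Walk.length hdv
      simp only [Walk.length_append] at hl2
      refine ⟨(v.takeUntil x hx').length, by omega, Or.inl fun s hs => ?_⟩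
      rw [hvert s hs, hMeq]
      rw [Walk.append_assoc] at hdv
      exact ((congrArg (fun p => Walk.getVert p _) hdv).trans
        (getVert_middle _ _ _ (by omega))).symm

end Geo

/-! ### The second moment method for a finite family of events -/

/-- Second moment bound in the form used for path counting: here `M` is a proxy for the mean of
the number `S` of events that occur, and the estimate is the expectation of
`(S - M · 1_{S > 0})² ≥ 0`. -/
lemma second_moment {Ω F : Type*} [MeasurableSpace Ω] [Fintype F] (μ : Measure Ω)
    [IsProbabilityMeasure μ] (E : F → Set Ω) (hE : ∀ f, MeasurableSet (E f)) {M ε R : ℝ}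
    (hM : 0 < M) (h1 : (1 - ε) * M ≤ ∑ f, μ.real (E f))
    (h2 : ∑ f, ∑ g, μ.real (E f ∩ E g) ≤ M ^ 2 + R * M) :
    1 - 2 * ε - R / M ≤ μ.real (⋃ f, E f) := by
  have hU : MeasurableSet (⋃ f, E f) := MeasurableSet.iUnion hE
  have hpt : ∀ ω, 0 ≤ (∑ f, ∑ g, (E f ∩ E g).indicator (fun _ => (1 : ℝ)) ω)
      - 2 * M * (∑ f, (E f).indicator (fun _ => (1 : ℝ)) ω)
      + M ^ 2 * (⋃ f, E f).indicator (fun _ => (1 : ℝ)) ω := by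
    intro ω
    have hS : (∑ f, ∑ g, (E f ∩ E g).indicator (fun _ => (1 : ℝ)) ω)
        = (∑ f, (E f).indicator (fun _ => (1 : ℝ)) ω) ^ 2 := by
      rw [sq, Finset.sum_mul_sum]
      refine Finset.sum_congr rfl fun f _ => Finset.sum_congr rfl fun g _ => ?_
      by_cases hf : ω ∈ E f <;> by_cases hg : ω ∈ E g <;> simp [hf, hg]
    rw [hS]
    by_cases h : ω ∈ ⋃ f, E f
    · rw [Set.indicator_of_mem h]
      nlinarith [sq_nonneg ((∑ f, (E f).indicator (fun _ => (1 : ℝ)) ω) - M)]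
    · have h0 : ∑ f, (E f).indicator (fun _ => (1 : ℝ)) ω = 0 := by
        refine Finset.sum_eq_zero fun f _ => Set.indicator_of_notMem (fun hf => h ?_) _
        exact Set.mem_iUnion.2 ⟨f, hf⟩
      rw [h0, Set.indicator_of_notMem h]; simp
  have hint : ∀ A : Set Ω, MeasurableSet A → Integrable (A.indicator fun _ => (1 : ℝ)) μ :=
    fun A hA => (integrable_const 1).indicator hA
  have hi1 : Integrable (fun ω => ∑ f, ∑ g, (E f ∩ E g).indicator (fun _ => (1 : ℝ)) ω) μ :=
    integrable_finsetSum _ fun f _ => integrable_finsetSum _ fun g _ =>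
      hint _ ((hE f).inter (hE g))
  have hi2 : Integrable (fun ω => ∑ f, (E f).indicator (fun _ => (1 : ℝ)) ω) μ :=
    integrable_finsetSum _ fun f _ => hint _ (hE f)
  have h := integral_nonneg (μ := μ) (f := fun ω =>
      (∑ f, ∑ g, (E f ∩ E g).indicator (fun _ => (1 : ℝ)) ω)
      - 2 * M * (∑ f, (E f).indicator (fun _ => (1 : ℝ)) ω)
      + M ^ 2 * (⋃ f, E f).indicator (fun _ => (1 : ℝ)) ω) hpt
  have hi3 : Integrable (fun ω => (∑ f, ∑ g, (E f ∩ E g).indicator (fun _ => (1 : ℝ)) ω)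
      - 2 * M * (∑ f, (E f).indicator (fun _ => (1 : ℝ)) ω)) μ := hi1.sub (hi2.const_mul _)
  rw [integral_add hi3 ((hint _ hU).const_mul _),
    integral_sub hi1 (hi2.const_mul _), integral_const_mul, integral_const_mul,
    integral_indicator_const _ hU, integral_finsetSum _ fun f _ => hint _ (hE f),
    integral_finsetSum _ fun f _ => integrable_finsetSum _ fun g _ =>
      hint _ ((hE f).inter (hE g))] at h
  have e1 : ∀ f, ∫ ω, ∑ g, (E f ∩ E g).indicator (fun _ => (1 : ℝ)) ω ∂μ
      = ∑ g, μ.real (E f ∩ E g) := by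
    intro f
    rw [integral_finsetSum _ fun g _ => hint _ ((hE f).inter (hE g))]
    exact Finset.sum_congr rfl fun g _ => by
      rw [integral_indicator_const _ ((hE f).inter (hE g))]; simp
  have e2 : ∀ f, ∫ ω, (E f).indicator (fun _ => (1 : ℝ)) ω ∂μ = μ.real (E f) := by
    intro f
    rw [integral_indicator_const _ (hE f)]; simp
  simp only [e1, e2, smul_eq_mul, mul_one] at h
  have h3 : 0 ≤ M * (M * (μ.real (⋃ f, E f) - 1 + 2 * ε) + R) := by nlinarith
  have h4 := nonneg_of_mul_nonneg_right h3 hM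
  have h5 : 1 - 2 * ε - μ.real (⋃ f, E f) ≤ R / M := by
    rw [le_div_iff₀ hM]; nlinarith
  linarith

/-! ### The family of vertex sequences and their walks -/

lemma exists_walk {n : ℕ} : ∀ {k : ℕ} (f : Fin (k + 1) → Fin n), Function.Injective f →
    ∃ p : (Kn n).Walk (f 0) (f (Fin.last k)), p.support = List.ofFn f := by
  intro k
  induction k with
  | zero => intro f _; exact ⟨SimpleGraph.Walk.nil, by simp⟩
  | succ k ih =>
    intro f hf
    obtain ⟨q, hq⟩ := ih (fun i => f i.succ) (fun a b h => Fin.succ_injective _ (hf h))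
    have hadj : (Kn n).Adj (f 0) (f (Fin.succ 0)) := by
      simp only [Kn, SimpleGraph.top_adj]
      exact fun h => Fin.succ_ne_zero _ (hf h).symm
    refine ⟨SimpleGraph.Walk.cons hadj q, ?_⟩
    rw [SimpleGraph.Walk.support_cons, hq, List.ofFn_succ (f := f)]

/-- The walk through the vertices `f 0, f 1, …, f k` in this order. -/
noncomputable def seqWalk {n k : ℕ} (f : Fin (k + 1) ↪ Fin n) :
    (Kn n).Walk (f 0) (f (Fin.last k)) :=
  (exists_walk f f.injective).choose

section Seq
variable {n k : ℕ} (f : Fin (k + 1) ↪ Fin n)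

lemma seqWalk_support : (seqWalk f).support = List.ofFn f :=
  (exists_walk f f.injective).choose_spec

lemma seqWalk_isPath : (seqWalk f).IsPath := by
  rw [SimpleGraph.Walk.isPath_def, seqWalk_support]
  exact List.nodup_ofFn.2 f.injective

lemma seqWalk_length : (seqWalk f).length = k := by
  have := (seqWalk f).length_support
  rw [seqWalk_support, List.length_ofFn] at this
  omega

lemma seqWalk_getVert {i : ℕ} (hi : i < k + 1) : (seqWalk f).getVert i = f ⟨i, hi⟩ := by
  have h : i ≤ (seqWalk f).length := by rw [seqWalk_length]; omega
  rw [SimpleGraph.Walk.getVert_eq_support_getElem _ h]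
  simp only [seqWalk_support, List.getElem_ofFn]

lemma seqWalk_edges_nodup : (seqWalk f).edges.Nodup :=
  (seqWalk_isPath f).isTrail.edges_nodup

lemma seqWalk_edges_length : (seqWalk f).edges.length = k := by
  rw [SimpleGraph.Walk.length_edges, seqWalk_length]

end Seq

lemma measurableSet_strictGeo {n : ℕ} {i j : Fin n} (p : (Kn n).Walk i j) :
    MeasurableSet {w | StrictGeo w p} := by
  have : {w | StrictGeo w p} = ⋂ q : (Kn n).Walk i j, ⋂ _ : q ≠ p,
      {w | walkWeight w p < walkWeight w q} := by
    ext w; simp [StrictGeo]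
  rw [this]
  exact MeasurableSet.iInter fun q => MeasurableSet.iInter fun _ =>
    measurableSet_lt (measurable_walkWeight p) (measurable_walkWeight q)

lemma le_maxMinLen_of_strictGeo {n : ℕ} {w : Sym2 (Fin n) → ℝ} {i j : Fin n}
    {p : (Kn n).Walk i j} (hp : p.IsPath) (h : StrictGeo w p) : p.length ≤ maxMinLen w := by
  refine (maxMinLen_le_iff w _).1 le_rfl i j p ⟨hp, fun q _ => ?_⟩
  by_cases hq : q = p
  · rw [hq]
  · exact (h q hq).le

/-! ### Excursions are unlikely -/

/-- In a complete graph a walk with `m + 1` edges and given ends has `m` free vertices. -/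
lemma card_walks_le {n : ℕ} [DecidableRel (Kn n).Adj] (m : ℕ) : ∀ u v : Fin n,
    ((Kn n).finsetWalkLength (m + 1) u v).card ≤ n ^ m := by
  induction m with
  | zero =>
    intro u v
    rw [pow_zero, Finset.card_le_one]
    intro p hp q hq
    rw [SimpleGraph.mem_finsetWalkLength_iff] at hp hq
    cases p with
    | nil => simp at hp
    | cons h p => cases p with
      | cons h' p => simp at hp
      | nil => cases q with
        | nil => simp at hq
        | cons h q => cases q with
          | cons h' q => simp at hq
          | nil => rfl
  | succ m ih =>
    intro u v
    rw [SimpleGraph.finsetWalkLength]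
    refine Finset.card_biUnion_le.trans ?_
    simp only [Finset.card_map]
    refine (Finset.sum_le_sum fun (x : (Kn n).neighborSet u) _ => ih x.1 v).trans ?_
    rw [Finset.sum_const, smul_eq_mul, pow_succ, mul_comm]
    gcongr
    refine (Finset.card_univ (α := (Kn n).neighborSet u)).le.trans ?_
    exact (Fintype.card_subtype_le _).trans (by simp)

/-- The geometric series with ratio `1 / s`, where `s = 1 + 1 / x`, sums to `1 / (s - 1) = x`. -/
lemma geom_sum_aux {x : ℝ} (hx : 0 < x) (N : ℕ) :
    ∑ m ∈ Finset.range N, (1 / (1 + 1 / x)) ^ (m + 1) ≤ x := by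
  have hq : (1 / (1 + 1 / x)) = x / (x + 1) := by field_simp
  rw [hq]
  have hq' : x / (x + 1) * x = x - x / (x + 1) := by field_simp; ring
  have : ∀ N : ℕ, ∑ m ∈ Finset.range N, (x / (x + 1)) ^ (m + 1) = x - x * (x / (x + 1)) ^ N := by
    intro N
    induction N with
    | zero => simp
    | succ N ih =>
      rw [Finset.sum_range_succ, ih, pow_succ]
      linear_combination ((x / (x + 1)) ^ N) * hq'
  rw [this]
  have : 0 ≤ x * (x / (x + 1)) ^ N := by positivity
  linarith

/-- Probability that `N` holds together with a light path `e` whose edges avoid `S`, where `N`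
only depends on the weights in `S`. The tilt `1 + 1 / x` costs just a factor `exp 1` compared with
the tilt `1`, and the bound is then summable over the length of `e`. -/
lemma prob_inter_light {n : ℕ} (hn : 0 < n) {x : ℝ} (hx : 0 < x) (S : Finset (Sym2 (Fin n)))
    {N : Set (Sym2 (Fin n) → ℝ)} (hN : MeasurableSet N) (hNS : DependsOnSet S N) {u v : Fin n}
    (e : (Kn n).Walk u v) (he : e.IsPath) (hd : ∀ f ∈ e.edges, f ∉ S) :
    piExp (Sym2 (Fin n)) (1 / n) (N ∩ {w | walkWeight w e ≤ x})
      ≤ piExp (Sym2 (Fin n)) (1 / n) N *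
        ENNReal.ofReal (exp (x + 1) * (1 / n) ^ e.length * (1 / (1 + 1 / x)) ^ e.length) := by
  have hr : (0 : ℝ) < 1 / n := by positivity
  have hs : 0 < 1 + 1 / x := by positivity
  rw [indep_events hr (T := e.edges.toFinset) (Finset.disjoint_right.2 fun f hf =>
    hd f (by simpa using hf)) hN (measurableSet_le (measurable_walkWeight e) measurable_const)
    hNS (dependsOn_listSum_le x e.edges)]
  gcongr
  refine (prob_sum_le hr e.edges he.isTrail.edges_nodup hs).trans (le_of_eq ?_)
  rw [SimpleGraph.Walk.length_edges]
  congr 1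
  rw [mul_assoc, ← mul_pow, mul_one_div]
  congr 2
  field_simp

/-- A path of weight at most `x` fails to be the unique geodesic only if some excursion off it is
light, and a union bound over excursions shows that this is unlikely, even given an event `N` that
depends only on the weights along the path. -/
lemma excursion_prob {n : ℕ} (hn : 0 < n) {x : ℝ} (hx : 0 < x) {i j : Fin n}
    (p : (Kn n).Walk i j) (hp : p.IsPath) {N : Set (Sym2 (Fin n) → ℝ)} (hN : MeasurableSet N)
    (hNS : DependsOnSet p.edges.toFinset N) (hNx : ∀ w ∈ N, walkWeight w p ≤ x) :
    piExp (Sym2 (Fin n)) (1 / n) (N ∩ {w | ¬ StrictGeo w p})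
      ≤ piExp (Sym2 (Fin n)) (1 / n) N *
        ENNReal.ofReal (((p.length : ℝ) + 1) ^ 2 * (exp (x + 1) * x / n)) := by
  classical
  have hr : (0 : ℝ) < 1 / n := by positivity
  set μ := piExp (Sym2 (Fin n)) (1 / n) with hμ
  set V := p.support.toFinset with hV
  let W : (m : ℕ) → (u v : Fin n) → Finset ((Kn n).Walk u v) := fun m u v =>
    ((Kn n).finsetWalkLength (m + 1) u v).filter fun e =>
      e.IsPath ∧ ∀ f ∈ e.edges, f ∉ p.edges.toFinset
  have hsub : N ∩ {w | ¬ StrictGeo w p} ⊆ {w | ¬ ∀ e, 0 < w e} ∪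
      ⋃ u ∈ V, ⋃ v ∈ V, ⋃ m ∈ Finset.range n, ⋃ e ∈ W m u v, (N ∩ {w | walkWeight w e ≤ x}) := by
    rintro w ⟨hwN, hw⟩
    by_cases hpos : ∀ e, 0 < w e
    · right
      obtain ⟨u, hu, v, hv, huv, e, he, hed, hew⟩ := exists_excursion hpos p hp hw
      have hlen : e.length < n := by simpa using he.length_lt
      have hlen0 : e.length ≠ 0 := fun h => huv (SimpleGraph.Walk.eq_of_length_eq_zero h)
      simp only [Set.mem_iUnion]
      refine ⟨u, by simpa [hV] using hu, v, by simpa [hV] using hv, e.length - 1,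
        Finset.mem_range.2 (by omega), e, ?_, hwN, hew.trans (hNx w hwN)⟩
      simp only [W, Finset.mem_filter, SimpleGraph.mem_finsetWalkLength_iff, List.mem_toFinset]
      exact ⟨by omega, he, hed⟩
    · left; exact hpos
  have hinner : ∀ u v : Fin n, ∀ m : ℕ,
      μ (⋃ e ∈ W m u v, (N ∩ {w | walkWeight w e ≤ x}))
        ≤ μ N * ENNReal.ofReal (exp (x + 1) / n * (1 / (1 + 1 / x)) ^ (m + 1)) := by
    intro u v m
    refine (measure_biUnion_finset_le _ _).trans ?_
    refine (Finset.sum_le_card_nsmul _ _ (μ N * ENNReal.ofReal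
      (exp (x + 1) * (1 / n) ^ (m + 1) * (1 / (1 + 1 / x)) ^ (m + 1))) ?_).trans ?_
    · intro e he
      simp only [W, Finset.mem_filter, SimpleGraph.mem_finsetWalkLength_iff] at he
      have := prob_inter_light hn hx p.edges.toFinset hN hNS e he.2.1 he.2.2
      rwa [he.1] at this
    · rw [nsmul_eq_mul, mul_left_comm]
      gcongr
      have hc : (W m u v).card ≤ n ^ m := (Finset.card_filter_le _ _).trans (card_walks_le m u v)
      calc ((W m u v).card : ENNReal) * _ ≤ ENNReal.ofReal ((n : ℝ) ^ m) * _ := by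
            gcongr
            rw [ENNReal.ofReal_pow (by positivity), ENNReal.ofReal_natCast]
            exact_mod_cast hc
        _ = _ := by
            rw [← ENNReal.ofReal_mul (by positivity)]
            congr 1
            rw [one_div (n : ℝ), inv_pow, pow_succ]
            field_simp
  have hzero : μ {w | ¬ ∀ e, 0 < w e} = 0 := ae_iff.1 (piExp_ae_pos hr)
  have hcard : V.card ≤ p.length + 1 := by
    rw [← SimpleGraph.Walk.length_support]; exact List.toFinset_card_le _
  have hm : ∀ u v : Fin n, μ (⋃ m ∈ Finset.range n, ⋃ e ∈ W m u v, (N ∩ {w | walkWeight w e ≤ x}))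
      ≤ μ N * ENNReal.ofReal (exp (x + 1) * x / n) := by
    intro u v
    refine (measure_biUnion_finset_le _ _).trans ((Finset.sum_le_sum fun m _ =>
      hinner u v m).trans ?_)
    rw [← Finset.mul_sum, ← ENNReal.ofReal_sum_of_nonneg fun m _ => by positivity,
      ← Finset.mul_sum]
    gcongr
    rw [mul_div_right_comm]
    gcongr
    exact geom_sum_aux hx n
  refine (measure_mono hsub).trans ((measure_union_le _ _).trans ?_)
  rw [hzero, zero_add]
  refine (measure_biUnion_finset_le _ _).trans ?_
  refine (Finset.sum_le_card_nsmul _ _ (V.card • (μ N * ENNReal.ofReal (exp (x + 1) * x / n)))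
    fun u _ => (measure_biUnion_finset_le _ _).trans
      (Finset.sum_le_card_nsmul _ _ _ fun v _ => hm u v)).trans ?_
  rw [smul_smul, nsmul_eq_mul, mul_left_comm]
  gcongr
  rw [ENNReal.ofReal_mul (by positivity)]
  gcongr
  rw [ENNReal.ofReal_pow (by positivity), sq]
  have h1 : ENNReal.ofReal ((p.length : ℝ) + 1) = ((p.length + 1 : ℕ) : ENNReal) := by
    rw [← ENNReal.ofReal_natCast]; push_cast; rfl
  rw [h1]
  exact_mod_cast Nat.mul_le_mul hcard hcard

/-! ### Correlation of two vertex sequences -/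

section Pairs
variable {n k : ℕ}

/-- Prescribing `l + 1` consecutive entries leaves at most `n ^ (k - l)` sequences. -/
lemma card_prescribed {a l : ℕ} (hal : a + l ≤ k) (y : ℕ → Fin n) :
    (Finset.univ.filter fun g : Fin (k + 1) ↪ Fin n =>
      ∀ s ≤ l, (seqWalk g).getVert (a + s) = y s).card ≤ n ^ (k - l) := by
  have h1 : (Finset.univ : Finset (Fin (k - l) → Fin n)).card = n ^ (k - l) := by simp
  rw [← h1]
  refine Finset.card_le_card_of_injOn (fun g i => if (i : ℕ) < a then (seqWalk g).getVert i
    else (seqWalk g).getVert (i + l + 1)) (fun _ _ => Finset.mem_coe.2 (Finset.mem_univ _)) ?_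
  intro g hg g' hg' h
  simp only [Finset.coe_filter, Finset.mem_univ, true_and, Set.mem_ofPred_eq] at hg hg'
  refine DFunLike.ext _ _ fun ⟨j, hj⟩ => ?_
  refine (seqWalk_getVert g hj).symm.trans (Eq.trans ?_ (seqWalk_getVert g' hj))
  rcases lt_or_ge j a with hja | hja
  · have := congrFun h ⟨j, by omega⟩
    simpa [hja] using this
  · rcases le_or_gt j (a + l) with hjl | hjl
    · obtain ⟨s, rfl⟩ := Nat.exists_eq_add_of_le hja
      rw [hg s (by omega), hg' s (by omega)]
    · have := congrFun h ⟨j - l - 1, by omega⟩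
      have h2 : ¬ (j - l - 1 < a) := by omega
      have h3 : j - l - 1 + l + 1 = j := by omega
      simpa [h2, h3] using this

/-- The admissible deficit profile: a stretch missing `m` of the `k` edges of a path must carry
all but `(5m/4 + D) x / k` of the weight budget `x`. -/
noncomputable def prof (x D : ℝ) (k : ℕ) (m : ℕ) : ℝ := (5 / 4 * (m : ℝ) + D) * x / k

/-- The event that the walk along `f` has weight at most `x` and regularly spread weight. -/
noncomputable def niceSeq (x D : ℝ) (f : Fin (k + 1) ↪ Fin n) : Set (Sym2 (Fin n) → ℝ) :=
  Nice x (prof x D k) (seqWalk f).edges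

/-- The event that the walk along `f` is a nice unique geodesic. -/
noncomputable def goodSeq (x D : ℝ) (f : Fin (k + 1) ↪ Fin n) : Set (Sym2 (Fin n) → ℝ) :=
  niceSeq x D f ∩ {w | StrictGeo w (seqWalk f)}

/-- Two vertex sequences share an edge. -/
def Share (f g : Fin (k + 1) ↪ Fin n) : Prop :=
  ∃ e ∈ (seqWalk g).edges, e ∈ (seqWalk f).edges

/-- The sequence `g` follows `f` along a stretch of `l` edges, starting at position `a` in `g` and
occupying the positions `c, …, c + l` of `f`, in the direction given by `o`. -/
def Block (f g : Fin (k + 1) ↪ Fin n) (a l c : ℕ) (o : Bool) : Prop :=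
  a + l ≤ k ∧ ∀ s ≤ l, (seqWalk g).getVert (a + s)
    = if o then (seqWalk f).getVert (c + s) else (seqWalk f).getVert (c + (l - s))

lemma measurableSet_niceSeq (x D : ℝ) (f : Fin (k + 1) ↪ Fin n) :
    MeasurableSet (niceSeq x D f) := measurableSet_nice _ _ _

lemma measurableSet_goodSeq (x D : ℝ) (f : Fin (k + 1) ↪ Fin n) :
    MeasurableSet (goodSeq x D f) :=
  (measurableSet_niceSeq x D f).inter (measurableSet_strictGeo _)

/-- Edges off the walk of `f`, light enough to complete a nice sequence, cost `1 / n` each up to a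
common factor `exp D`: at the tilt `k / x ≥ exp (5 / 4)` the slope `5 / 4` of the profile is absorbed
by the gain `(x / k) ^ m`. -/
lemma prob_inter_rest (hn : 0 < n) (hk : 0 < k) {x D : ℝ} (hx : 0 < x)
    (hkx : exp (5 / 4) ≤ k / x) (f : Fin (k + 1) ↪ Fin n) (R : List (Sym2 (Fin n)))
    (hR : R.Nodup) (hd : ∀ e ∈ R, e ∉ (seqWalk f).edges) :
    piExp (Sym2 (Fin n)) (1 / n) (niceSeq x D f ∩ {w | (R.map w).sum ≤ prof x D k R.length})
      ≤ piExp (Sym2 (Fin n)) (1 / n) (niceSeq x D f) *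
        ENNReal.ofReal (exp D * (1 / n) ^ R.length) := by
  have hr : (0 : ℝ) < 1 / n := by positivity
  have hk' : (0 : ℝ) < k := by exact_mod_cast hk
  have hs : 0 < k / x := by positivity
  rw [indep_events hr (S := (seqWalk f).edges.toFinset) (T := R.toFinset)
    (Finset.disjoint_right.2 fun e he => by simpa using hd e (by simpa using he))
    (measurableSet_niceSeq x D f) (measurableSet_le (measurable_listSum R) measurable_const)
    (dependsOn_nice _ _ _) (dependsOn_listSum_le _ R)]
  gcongr
  refine (prob_sum_le hr R hR hs).trans (ENNReal.ofReal_le_ofReal ?_)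
  have h1 : k / x * prof x D k R.length = D + R.length * (5 / 4) := by
    unfold prof; field_simp; ring
  rw [h1, exp_add, exp_nat_mul, mul_assoc, ← mul_pow]
  gcongr
  rw [mul_div_assoc', div_le_iff₀ hs, mul_comm]
  gcongr

/-- For a fixed sequence `f`, the expected number of good sequences sharing an edge with a nice
`f` is at most polynomial in `k`. -/
lemma sum_share_le (hn : 0 < n) (hk : 0 < k) {x D : ℝ} (hx : 0 < x)
    (hkx : exp (5 / 4) ≤ k / x) (f : Fin (k + 1) ↪ Fin n) [DecidablePred (Share f)] :
    ∑ g ∈ Finset.univ.filter (Share f),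
        piExp (Sym2 (Fin n)) (1 / n) (goodSeq x D f ∩ goodSeq x D g)
      ≤ piExp (Sym2 (Fin n)) (1 / n) (niceSeq x D f) *
        ENNReal.ofReal (2 * ((k : ℝ) + 1) ^ 3 * exp D) := by
  classical
  set μ := piExp (Sym2 (Fin n)) (1 / n) with hμ
  let B : ℕ → ENNReal := fun m => μ (niceSeq x D f) * ENNReal.ofReal (exp D * (1 / n) ^ m)
  let T := Fin (k + 1) × Fin (k + 1) × Fin (k + 1) × Bool
  have hpt : ∀ g : Fin (k + 1) ↪ Fin n, Share f g → μ (goodSeq x D f ∩ goodSeq x D g)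
      ≤ ∑ τ : T, if Block f g τ.1 τ.2.1 τ.2.2.1 τ.2.2.2 then B (k - τ.2.1) else 0 := by
    intro g hg
    rcases (goodSeq x D f ∩ goodSeq x D g).eq_empty_or_nonempty with h0 | ⟨w, hwf, hwg⟩
    · rw [h0, measure_empty]; exact zero_le
    -- the decomposition found at one sample point `w` concerns `f` and `g` only, so it can be used
    -- at all sample points of the event
    obtain ⟨P, M, Q, hed, hav, hM1, c, hc, hor⟩ := share_block (seqWalk f) (seqWalk g) hwf.2 hwg.2 hg
    have hlen := seqWalk_edges_length g
    rw [hed] at hlen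
    simp only [List.length_append] at hlen
    rw [seqWalk_length] at hc
    have hmem : ∃ o : Bool, Block f g P.length M.length c o := by
      rcases hor with h | h
      · exact ⟨true, by omega, by simpa using h⟩
      · exact ⟨false, by omega, by simpa using h⟩
    obtain ⟨o, ho⟩ := hmem
    have hPQ : (P ++ Q).length = k - M.length := by rw [List.length_append]; omega
    have hle : μ (goodSeq x D f ∩ goodSeq x D g) ≤ B (k - M.length) := by
      refine (measure_mono ?_).trans (hPQ ▸ prob_inter_rest hn hk hx hkx f (P ++ Q) ?_ hav)
      · rintro w' ⟨h1, h2⟩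
        refine ⟨h1.1, ?_⟩
        have h3 := h2.1.1
        have h4 := h2.1.2 P M Q hed
        rw [hed] at h3
        simp only [List.map_append, List.sum_append, Set.mem_ofPred_eq] at h3 ⊢
        rw [← hPQ, List.length_append]
        linarith
      · have := seqWalk_edges_nodup g
        rw [hed] at this
        refine List.Nodup.sublist ?_ this
        exact (List.sublist_append_left P M).append (List.Sublist.refl Q)
    refine hle.trans ?_
    have := Finset.single_le_sum (s := Finset.univ) (f := fun τ : T =>
      if Block f g τ.1 τ.2.1 τ.2.2.1 τ.2.2.2 then B (k - τ.2.1) else 0)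
      (fun _ _ => zero_le) (Finset.mem_univ ((⟨P.length, by omega⟩, ⟨M.length, by omega⟩,
        ⟨c, by omega⟩, o) : T))
    simpa [ho] using this
  refine (Finset.sum_le_sum fun g hg => hpt g (Finset.mem_filter.1 hg).2).trans ?_
  refine (Finset.sum_le_sum_of_subset (Finset.subset_univ _)).trans ?_
  rw [Finset.sum_comm]
  have hT : ∀ τ : T, (∑ g : Fin (k + 1) ↪ Fin n,
      if Block f g τ.1 τ.2.1 τ.2.2.1 τ.2.2.2 then B (k - τ.2.1) else 0)
        ≤ μ (niceSeq x D f) * ENNReal.ofReal (exp D) := by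
    rintro ⟨⟨a, ha⟩, ⟨l, hl⟩, ⟨c, hc⟩, o⟩
    dsimp only
    rw [← Finset.sum_filter, Finset.sum_const, nsmul_eq_mul, mul_left_comm]
    gcongr
    by_cases hal : a + l ≤ k
    · have hcard : (Finset.univ.filter fun g => Block f g a l c o).card ≤ n ^ (k - l) := by
        simpa [Block, hal] using card_prescribed hal (fun s =>
          if o then (seqWalk f).getVert (c + s) else (seqWalk f).getVert (c + (l - s)))
      calc _ ≤ ENNReal.ofReal ((n : ℝ) ^ (k - l))
              * ENNReal.ofReal (exp D * (1 / n) ^ (k - l)) := by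
            gcongr
            rw [ENNReal.ofReal_pow (by positivity), ENNReal.ofReal_natCast]
            exact_mod_cast hcard
        _ = _ := by
            rw [← ENNReal.ofReal_mul (by positivity), mul_left_comm, ← mul_pow, mul_one_div,
              div_self (by positivity), one_pow, mul_one]
    · simp [Block, hal]
  refine (Finset.sum_le_sum fun τ _ => hT τ).trans (le_of_eq ?_)
  rw [Finset.sum_const, Finset.card_univ, nsmul_eq_mul, mul_left_comm, mul_comm (2 * _),
    ENNReal.ofReal_mul (exp_pos _).le, mul_comm (ENNReal.ofReal (exp D))]
  congr 2
  have : (2 * ((k : ℝ) + 1) ^ 3) = ((2 * (k + 1) ^ 3 : ℕ) : ℝ) := by push_cast; ring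
  rw [this, ENNReal.ofReal_natCast]
  congr 1
  simp only [T, Fintype.card_prod, Fintype.card_fin, Fintype.card_bool]
  ring

end Pairs

/-! ### The lower bound for fixed `n` -/

section Lower
variable {n k : ℕ}

/-- Few nice sequences fail to be geodesic. -/
lemma sum_good_ge (hn : 0 < n) {x : ℝ} (hx : 0 < x) (D : ℝ) :
    (1 - ((k : ℝ) + 1) ^ 2 * (exp (x + 1) * x / n)) *
        ∑ f : Fin (k + 1) ↪ Fin n, (piExp (Sym2 (Fin n)) (1 / n)).real (niceSeq x D f)
      ≤ ∑ f : Fin (k + 1) ↪ Fin n, (piExp (Sym2 (Fin n)) (1 / n)).real (goodSeq x D f) := by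
  have hr : (0 : ℝ) < 1 / n := by positivity
  have := piExp_prob (ι := Sym2 (Fin n)) hr
  rw [Finset.mul_sum]
  refine Finset.sum_le_sum fun f _ => ?_
  set μ := piExp (Sym2 (Fin n)) (1 / n)
  have h := excursion_prob hn hx (seqWalk f) (seqWalk_isPath f) (measurableSet_niceSeq x D f)
    (dependsOn_nice _ _ _) (fun w hw => hw.1)
  rw [seqWalk_length] at h
  have h' : μ.real (niceSeq x D f ∩ {w | ¬ StrictGeo w (seqWalk f)})
      ≤ μ.real (niceSeq x D f) * (((k : ℝ) + 1) ^ 2 * (exp (x + 1) * x / n)) := by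
    have := ENNReal.toReal_mono (by finiteness) h
    rwa [ENNReal.toReal_mul, ENNReal.toReal_ofReal (by positivity)] at this
  have h2 := measureReal_inter_add_sdiff (μ := μ) (s := niceSeq x D f)
    (measurableSet_strictGeo (seqWalk f))
  have h3 : niceSeq x D f \ {w | StrictGeo w (seqWalk f)}
      = niceSeq x D f ∩ {w | ¬ StrictGeo w (seqWalk f)} := rfl
  rw [h3] at h2
  change _ ≤ μ.real (niceSeq x D f ∩ {w | StrictGeo w (seqWalk f)})
  linarith

/-- Second moment of the number of good sequences: sequences without a common edge are independent,
and those with a common edge are counted by `sum_share_le`. -/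
lemma sum_pairs_le (hn : 0 < n) (hk : 0 < k) {x D : ℝ} (hx : 0 < x) (hkx : exp (5 / 4) ≤ k / x) :
    ∑ f : Fin (k + 1) ↪ Fin n, ∑ g : Fin (k + 1) ↪ Fin n,
        (piExp (Sym2 (Fin n)) (1 / n)).real (goodSeq x D f ∩ goodSeq x D g)
      ≤ (∑ f : Fin (k + 1) ↪ Fin n, (piExp (Sym2 (Fin n)) (1 / n)).real (niceSeq x D f)) ^ 2 +
        (2 * ((k : ℝ) + 1) ^ 3 * exp D) *
          ∑ f : Fin (k + 1) ↪ Fin n, (piExp (Sym2 (Fin n)) (1 / n)).real (niceSeq x D f) := by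
  classical
  have hr : (0 : ℝ) < 1 / n := by positivity
  have := piExp_prob (ι := Sym2 (Fin n)) hr
  rw [sq, Finset.sum_mul, Finset.mul_sum, ← Finset.sum_add_distrib]
  refine Finset.sum_le_sum fun f _ => ?_
  set μ := piExp (Sym2 (Fin n)) (1 / n)
  rw [← Finset.sum_filter_not_add_sum_filter _ (Share f)]
  refine add_le_add ?_ ?_
  · rw [Finset.mul_sum]
    refine (Finset.sum_le_sum fun g hg => ?_).trans
      (Finset.sum_le_sum_of_subset_of_nonneg (Finset.subset_univ _) fun _ _ _ => by positivity)
    have hd : Disjoint (seqWalk f).edges.toFinset (seqWalk g).edges.toFinset := by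
      rw [Finset.disjoint_left]
      intro e h1 h2
      exact (Finset.mem_filter.1 hg).2 ⟨e, by simpa using h2, by simpa using h1⟩
    have hi := indep_events hr hd (measurableSet_niceSeq x D f) (measurableSet_niceSeq x D g)
      (dependsOn_nice _ _ _) (dependsOn_nice _ _ _)
    have hi' : μ.real (niceSeq x D f ∩ niceSeq x D g)
        = μ.real (niceSeq x D f) * μ.real (niceSeq x D g) := by
      simp only [measureReal_def, ← ENNReal.toReal_mul]
      exact congrArg ENNReal.toReal hi
    rw [← hi']
    exact measureReal_mono (Set.inter_subset_inter Set.inter_subset_left Set.inter_subset_left)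
  · have h := sum_share_le hn hk (D := D) hx hkx f
    have h2 := ENNReal.toReal_mono (by finiteness) h
    rw [ENNReal.toReal_mul, ENNReal.toReal_ofReal (by positivity),
      ENNReal.toReal_sum fun _ _ => by finiteness, mul_comm] at h2
    exact h2

/-- First moment of the number of nice vertex sequences. The hypothesis `k ≤ αs x` enters through
`(e x / k) ^ k ≥ e ^ (-x)`, which is where the defining equation of `αs` is used. -/
lemma sum_nice_ge {αs : ℝ} (hαs : 1 < αs) (heq : αs * Real.log αs - αs = 1) (hk : 100 ≤ k)
    (hkn : 2 * k * (k + 1) ≤ n) {x : ℝ} (hx : 0 < x) (hkx : exp (5 / 4) ≤ k / x)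
    (hxk : k ≤ αs * x) :
    n * exp (-x) / (32 * k) ≤ ∑ f : Fin (k + 1) ↪ Fin n,
      (piExp (Sym2 (Fin n)) (1 / n)).real (niceSeq x (16 * Real.log k) f) := by
  have hk' : (100 : ℝ) ≤ k := by exact_mod_cast hk
  have hkn' : (2 * k * (k + 1) : ℝ) ≤ n := by exact_mod_cast hkn
  have hn' : (0 : ℝ) < n := by nlinarith
  have hr : (0 : ℝ) < 1 / n := by positivity
  have := piExp_prob (ι := Sym2 (Fin n)) hr
  have h1e : (1 : ℝ) ≤ exp (5 / 4) := one_le_exp (by norm_num)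
  have hβ1 : 1 ≤ k / x := h1e.trans hkx
  have hxk1 : x ≤ k := by rwa [le_div_iff₀ hx, one_mul] at hβ1
  have hxn : 1 / (n : ℝ) * x ≤ 1 := by
    rw [one_div_mul_eq_div, div_le_one hn']; nlinarith
  set b : ℝ := 1 / 2 * (exp (-(1 / n * x)) * (1 / n * x) ^ k / k.factorial) with hb
  have hb0 : 0 ≤ b := by positivity
  have hterm : ∀ f : Fin (k + 1) ↪ Fin n,
      b ≤ (piExp (Sym2 (Fin n)) (1 / n)).real (niceSeq x (16 * Real.log k) f) := by
    intro f
    have h := prob_nice hr hx hxn (seqWalk f).edges (seqWalk_edges_nodup f) hk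
      (seqWalk_edges_length f)
    have h2 := ENNReal.toReal_mono (by finiteness) h
    rwa [ENNReal.toReal_ofReal hb0] at h2
  refine le_trans ?_ (Finset.card_nsmul_le_sum _ _ _ fun f _ => hterm f)
  rw [Finset.card_univ, Fintype.card_embedding_eq, Fintype.card_fin, Fintype.card_fin, nsmul_eq_mul]
  -- the number of sequences is at least half of `n ^ (k + 1)`
  have hdesc : (n : ℝ) ^ (k + 1) / 2 ≤ (n.descFactorial (k + 1) : ℝ) := by
    have h := Nat.pow_sub_le_descFactorial n (k + 1)
    rw [Nat.add_sub_add_right] at h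
    have hkn2 : k ≤ n := by nlinarith
    have h2 : (((n : ℝ) - k) ^ (k + 1)) ≤ (n.descFactorial (k + 1) : ℝ) := by
      rw [← Nat.cast_sub hkn2]; exact_mod_cast h
    refine le_trans ?_ h2
    have h3 := one_add_mul_le_pow (a := -(k / n : ℝ)) (by
      have : (k : ℝ) / n ≤ 1 := by rw [div_le_one hn']; exact_mod_cast hkn2
      linarith) (k + 1)
    have h4 : ((n : ℝ) - k) = n * (1 + -(k / n : ℝ)) := by field_simp; ring
    rw [h4, mul_pow, div_eq_mul_one_div]
    gcongr
    refine le_trans ?_ h3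
    push_cast
    have : ((k : ℝ) + 1) * (k / n) ≤ 1 / 2 := by
      rw [mul_div_assoc', div_le_iff₀ hn']; nlinarith
    linarith
  have hlogβ : k * (Real.log (k / x) - 1) ≤ x := by
    have hβα : k / x ≤ αs := by rwa [div_le_iff₀ hx]
    have h1 : Real.log (k / x) ≤ Real.log αs := Real.log_le_log (by positivity) hβα
    have h2 : 0 ≤ Real.log αs - 1 := by
      by_contra hneg
      nlinarith
    calc k * (Real.log (k / x) - 1) ≤ k * (Real.log αs - 1) := by gcongr
      _ ≤ αs * x * (Real.log αs - 1) := by gcongr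
      _ = x := by linear_combination x * heq
  have hpow : exp (-x) * (k : ℝ) ^ k ≤ exp k * x ^ k := by
    have h1 : (k : ℝ) ^ k = exp (k * Real.log (k / x)) * x ^ k := by
      rw [← Real.log_pow, Real.exp_log (by positivity), ← mul_pow, div_mul_cancel₀ _ hx.ne']
    rw [h1, ← mul_assoc, ← exp_add]
    gcongr
    linarith
  have hfac := factorial_le (k := k) (by omega)
  have he1 : exp (1 : ℝ) ^ 2 ≤ 8 := by
    have := exp_one_lt_d9
    have h0 := exp_pos (1 : ℝ)
    nlinarith
  have hexp1 : exp (-1 : ℝ) ≤ exp (-(1 / n * x)) := exp_le_exp.2 (by linarith)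
  have hfpos : (0 : ℝ) < k.factorial := by positivity
  have hxfac : exp (-x) / (exp 1 * k) ≤ x ^ k / k.factorial := by
    rw [div_le_div_iff₀ (by positivity) hfpos]
    have hek := exp_pos (k : ℝ)
    have : exp (-x) * k.factorial * exp k ≤ x ^ k * (exp 1 * k) * exp k := by
      calc exp (-x) * k.factorial * exp k = exp (-x) * (k.factorial * exp k) := by ring
        _ ≤ exp (-x) * (exp 1 * k * (k : ℝ) ^ k) := by gcongr
        _ = exp 1 * k * (exp (-x) * (k : ℝ) ^ k) := by ring
        _ ≤ exp 1 * k * (exp k * x ^ k) := by gcongr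
        _ = _ := by ring
    exact le_of_mul_le_mul_right this hek
  calc n * exp (-x) / (32 * k) ≤ n * exp (-x) / (4 * exp 1 ^ 2 * k) := by
        gcongr; linarith
    _ = n / 4 * exp (-1) * (exp (-x) / (exp 1 * k)) := by
        rw [exp_neg 1]; field_simp
    _ ≤ n / 4 * exp (-(1 / n * x)) * (x ^ k / k.factorial) := by gcongr
    _ = (n : ℝ) ^ (k + 1) / 2 * b := by
        rw [hb, mul_pow, one_div (n : ℝ), inv_pow, pow_succ]
        field_simp
        norm_num
    _ ≤ _ := by gcongr

/-- The lower bound for given `n`, with explicit error. -/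
lemma lower_bound {αs : ℝ} (hαs : 1 < αs) (heq : αs * Real.log αs - αs = 1) (hk : 100 ≤ k)
    (hkn : 2 * k * (k + 1) ≤ n) {x : ℝ} (hx : 0 < x) (hkx : exp (5 / 4) ≤ k / x)
    (hxk : k ≤ αs * x) :
    (k : ℝ) - 600 * k ^ 21 / (n * exp (-x)) ≤ ∫ w, (maxMinLen w : ℝ) ∂(edgeSpace n) := by
  have hn : 0 < n := by nlinarith
  have hr : (0 : ℝ) < 1 / n := by positivity
  have hk' : (100 : ℝ) ≤ k := by exact_mod_cast hk
  have hprob := piExp_prob (ι := Sym2 (Fin n)) hr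
  have hnice := sum_nice_ge hαs heq hk hkn hx hkx hxk
  have hgood := sum_good_ge (k := k) hn hx (16 * Real.log k)
  have hpairs := sum_pairs_le (D := 16 * Real.log k) hn (by omega : 0 < k) hx hkx
  set μ := piExp (Sym2 (Fin n)) (1 / n) with hμ
  set M := ∑ f : Fin (k + 1) ↪ Fin n, μ.real (niceSeq x (16 * Real.log k) f)
  set z := n * exp (-x) with hz
  have hz0 : 0 < z := by positivity
  have hM : 0 < M := lt_of_lt_of_le (by positivity) hnice
  have hsec := second_moment μ (fun f : Fin (k + 1) ↪ Fin n => goodSeq x (16 * Real.log k) f)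
    (fun f => measurableSet_goodSeq _ _ f) hM hgood hpairs
  have h1e : (1 : ℝ) ≤ exp (5 / 4) := one_le_exp (by norm_num)
  have hβ1 : 1 ≤ k / x := h1e.trans hkx
  have hxk1 : x ≤ k := by rwa [le_div_iff₀ hx, one_mul] at hβ1
  have hsub : (⋃ f : Fin (k + 1) ↪ Fin n, goodSeq x (16 * Real.log k) f)
      ⊆ {w | (k : ℝ) ≤ (maxMinLen w : ℝ)} := by
    intro w hw
    obtain ⟨f, hf⟩ := Set.mem_iUnion.1 hw
    have := le_maxMinLen_of_strictGeo (seqWalk_isPath f) hf.2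
    rw [seqWalk_length] at this
    simpa using this
  have hmark := mul_meas_ge_le_integral_of_nonneg (μ := edgeSpace n)
    (f := fun w => (maxMinLen w : ℝ)) (Eventually.of_forall fun w => by positivity)
    (integrable_maxMinLen hn) (k : ℝ)
  have hmono : μ.real (⋃ f : Fin (k + 1) ↪ Fin n, goodSeq x (16 * Real.log k) f)
      ≤ μ.real {w | (k : ℝ) ≤ (maxMinLen w : ℝ)} := measureReal_mono hsub
  have he : exp (16 * Real.log k) = (k : ℝ) ^ 16 := by
    rw [mul_comm, ← Real.rpow_def_of_pos (by positivity)]; norm_cast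
  rw [he] at hsec
  have hε : 2 * (((k : ℝ) + 1) ^ 2 * (exp (x + 1) * x / n)) ≤ 24 * k ^ 20 / z := by
    have h1 : exp (x + 1) / n = exp 1 / z := by
      rw [hz, exp_add, exp_neg]; field_simp
    have h2 : exp (1 : ℝ) ≤ 3 := by linarith [exp_one_lt_d9]
    calc 2 * (((k : ℝ) + 1) ^ 2 * (exp (x + 1) * x / n))
        = 2 * (((k : ℝ) + 1) ^ 2 * (exp 1 * x)) / z := by
          rw [mul_div_right_comm, h1]; ring
      _ ≤ 2 * ((k + k : ℝ) ^ 2 * (3 * k)) / z := by gcongr; linarith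
      _ = 24 * k ^ 3 / z := by ring
      _ ≤ 24 * k ^ 20 / z := by
          gcongr
          · linarith
          · norm_num
  have hR : 2 * ((k : ℝ) + 1) ^ 3 * k ^ 16 / M ≤ 512 * k ^ 20 / z := by
    calc 2 * ((k : ℝ) + 1) ^ 3 * k ^ 16 / M
        ≤ 2 * (k + k : ℝ) ^ 3 * k ^ 16 / (z / (32 * k)) := by gcongr; linarith
      _ = 512 * k ^ 20 / z := by field_simp; ring
  have hfin : 1 - 600 * k ^ 20 / z ≤ μ.real {w | (k : ℝ) ≤ (maxMinLen w : ℝ)} := by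
    have h3 : 600 * (k : ℝ) ^ 20 / z = 24 * k ^ 20 / z + 512 * k ^ 20 / z + 64 * k ^ 20 / z := by ring
    have h4 : 0 ≤ 64 * (k : ℝ) ^ 20 / z := by positivity
    linarith
  refine le_trans ?_ hmark
  have : (k : ℝ) * (1 - 600 * k ^ 20 / z) = k - 600 * k ^ 21 / z := by ring
  rw [← this]
  exact mul_le_mul_of_nonneg_left hfin (by positivity)

end Lower

/-! ### Asymptotics -/

/-- The strict gap leaves room for the slope `5 / 4` of the profile once `k / x` is close to `αs`. -/
lemma exp_lt_of_eq {αs : ℝ} (hαs : 1 < αs) (heq : αs * Real.log αs - αs = 1) :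
    exp (5 / 4) < αs := by
  have h0 : 0 < αs := by linarith
  by_contra hle
  have hlog : Real.log αs ≤ 5 / 4 := by
    rw [Real.log_le_iff_le_exp h0]; exact not_lt.1 hle
  have h4 : exp (5 / 4 : ℝ) < 4 := by
    have h5 : exp (5 / 4 : ℝ) ^ 4 < 4 ^ 4 := by
      rw [← exp_nat_mul]
      have : ((4 : ℕ) : ℝ) * (5 / 4) = (5 : ℕ) * 1 := by norm_num
      rw [this, exp_nat_mul]
      calc exp 1 ^ 5 < 2.72 ^ 5 := by
            gcongr
            linarith [exp_one_lt_d9]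
        _ < 4 ^ 4 := by norm_num
    exact lt_of_pow_lt_pow_left₀ 4 (by norm_num) h5
  nlinarith [not_lt.1 hle]

/-- With `x = log n - 22 log log n` and `k = ⌊αs x⌋` the explicit bound gives the lower half. -/
lemma lower_asymp {αs : ℝ} (hαs : 1 < αs) (heq : αs * Real.log αs - αs = 1) :
    ∃ C : ℝ, ∀ᶠ n : ℕ in atTop, αs * Real.log n - 22 * αs * Real.log (Real.log n) - C
      ≤ ∫ w, (maxMinLen w : ℝ) ∂(edgeSpace n) := by
  have h0 : 0 < αs := by linarith
  have hgap := exp_lt_of_eq hαs heq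
  have hlog : Tendsto (fun n : ℕ => Real.log n) atTop atTop :=
    Real.tendsto_log_atTop.comp tendsto_natCast_atTop_atTop
  have hlo : ∀ᶠ n : ℕ in atTop, Real.log (Real.log n) ≤ 1 / 44 * Real.log n := by
    have := hlog.eventually (Real.isLittleO_log_id_atTop.bound (by norm_num : (0 : ℝ) < 1 / 44))
    filter_upwards [this, hlog.eventually_ge_atTop 0] with n hn hpos
    simp only [id, Real.norm_eq_abs, abs_of_nonneg hpos] at hn
    exact (le_abs_self _).trans hn
  have hpoly : ∀ᶠ n : ℕ in atTop, Real.log n ^ 2 ≤ 1 / (4 * αs ^ 2) * (n : ℝ) := by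
    have h := (isLittleO_pow_log_id_atTop (n := 2)).bound
      (by positivity : (0 : ℝ) < 1 / (4 * αs ^ 2))
    filter_upwards [tendsto_natCast_atTop_atTop.eventually h] with n hn
    simpa [abs_of_nonneg] using hn
  refine ⟨1 + 600 * αs ^ 21, ?_⟩
  filter_upwards [hlo, hpoly, hlog.eventually_ge_atTop (2 * (101 / αs)),
    hlog.eventually_ge_atTop 1, hlog.eventually_ge_atTop (2 * (1 / (αs - exp (5 / 4)))),
    eventually_gt_atTop 0] with n h1 h2 h3 h4 h5 hn
  set ℓ := Real.log n with hℓ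
  have hℓ0 : 0 < ℓ := by linarith
  set x := ℓ - 22 * Real.log ℓ with hx
  have hlℓ : 0 ≤ Real.log ℓ := Real.log_nonneg h4
  have hxl : ℓ / 2 ≤ x := by rw [hx]; linarith
  have hxℓ : x ≤ ℓ := by rw [hx]; linarith
  have hx0 : 0 < x := by linarith
  set k := ⌊αs * x⌋₊ with hk
  have hkle : (k : ℝ) ≤ αs * x := Nat.floor_le (by positivity)
  have hkge : αs * x - 1 < k := Nat.sub_one_lt_floor _
  have h100 : 101 ≤ αs * x := by
    have : 101 / αs ≤ x := by linarith
    rwa [div_le_iff₀ h0, mul_comm] at this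
  have hk100 : 100 ≤ k := Nat.le_floor (by push_cast; linarith)
  have hkℓ : (k : ℝ) ≤ αs * ℓ := hkle.trans (by gcongr)
  have hk1 : (1 : ℝ) ≤ k := by exact_mod_cast (by omega : 1 ≤ k)
  have hkn : 2 * k * (k + 1) ≤ n := by
    have : (2 * k * (k + 1) : ℝ) ≤ n := by
      calc (2 * k * (k + 1) : ℝ) ≤ 4 * (k : ℝ) ^ 2 := by nlinarith
        _ ≤ 4 * (αs * ℓ) ^ 2 := by gcongr
        _ = 4 * αs ^ 2 * ℓ ^ 2 := by ring
        _ ≤ 4 * αs ^ 2 * (1 / (4 * αs ^ 2) * n) := by gcongr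
        _ = n := by field_simp
    exact_mod_cast this
  have hkx : exp (5 / 4) ≤ k / x := by
    have hd : 0 < αs - exp (5 / 4) := by linarith
    have : 1 / (αs - exp (5 / 4)) ≤ x := by linarith
    rw [div_le_iff₀ hd] at this
    rw [le_div_iff₀ hx0]
    linarith
  have hmain := lower_bound hαs heq hk100 hkn hx0 hkx hkle
  have hz : (n : ℝ) * exp (-x) = ℓ ^ 22 := by
    have hn' : (0 : ℝ) < n := by exact_mod_cast hn
    have h6 : exp (22 * Real.log ℓ) = ℓ ^ 22 := by
      rw [mul_comm, ← Real.rpow_def_of_pos hℓ0]; norm_cast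
    rw [hx, neg_sub, exp_sub, h6, hℓ, Real.exp_log hn']
    field_simp
  rw [hz] at hmain
  have herr : 600 * (k : ℝ) ^ 21 / ℓ ^ 22 ≤ 600 * αs ^ 21 := by
    rw [div_le_iff₀ (by positivity)]
    calc 600 * (k : ℝ) ^ 21 ≤ 600 * (αs * ℓ) ^ 21 := by gcongr
      _ = 600 * αs ^ 21 * ℓ ^ 21 := by ring
      _ ≤ 600 * αs ^ 21 * ℓ ^ 22 := by
        gcongr
        norm_num
  have hαx : αs * x = αs * ℓ - 22 * αs * Real.log ℓ := by rw [hx]; ring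
  linarith

/-- There is a constant `L > 0` such that for all sufficiently large `n`,
`α* log n − L log log n ≤ E[max_{i,j} |P_{ij}|] ≤ α* log n + L`, where `α*` is the unique
solution in `(1,∞)` of `α log α − α = 1`. -/
theorem stmt3 (αs : ℝ) (hαs : αs ∈ Set.Ioi (1 : ℝ))
    (heq : αs * Real.log αs - αs = 1) :
    ∃ L > (0 : ℝ), ∀ᶠ n : ℕ in atTop,
      αs * Real.log n - L * Real.log (Real.log n) ≤
          ∫ w, (maxMinLen w : ℝ) ∂(edgeSpace n) ∧
        ∫ w, (maxMinLen w : ℝ) ∂(edgeSpace n) ≤ αs * Real.log n + L := by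
  have hα : 1 < αs := hαs
  obtain ⟨C, hC⟩ := lower_asymp hα heq
  have hl : 0 < Real.log αs := Real.log_pos hα
  have hlog : Tendsto (fun n : ℕ => Real.log (Real.log n)) atTop atTop :=
    Real.tendsto_log_atTop.comp (Real.tendsto_log_atTop.comp tendsto_natCast_atTop_atTop)
  refine ⟨22 * αs + |C| + αs / Real.log αs, by positivity, ?_⟩
  filter_upwards [hC, hlog.eventually_ge_atTop 1, eventually_gt_atTop 0] with n h1 h2 hn
  constructor
  · have h3 : C ≤ |C| * Real.log (Real.log n) :=
      (le_abs_self C).trans (le_mul_of_one_le_right (abs_nonneg C) h2)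
    have h4 : 0 ≤ αs / Real.log αs * Real.log (Real.log n) := by positivity
    linarith
  · have := upper_bound αs hα heq hn
    linarith [abs_nonneg C]
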